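/- For every ε > 0 there exists an integer A such that for every odd integer a ≥ A, one has n₁(a) + n₂(a) ≥ (2−ε)·(log a)/(1+log 2), where n₁(a) is the number of odd integers i ∈ {3,5,…,a} such that ζ(i) ∉ ℚ, and n₂(a) is the number of odd integers j ∈ {5,7,…,a} such that ζ(j) ∉ ℚ and ζ(j−2) ∈ ℚ. -/

import Mathlib

/-- The Riemann zeta value ζ(s) = Σ_{m ≥ 1} m^{-s}, as a real number. -/
noncomputable def zeta (s : ℕ) : ℝ := ∑' m : ℕ, 1 / ((m : ℝ) + 1) ^ s

/-!
Let `D = 2 ^ k`, `B = (2r + 1)D`, and let `R` be the rational function `auxFun` of degree at most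
`-2`, whose numerator vanishes at the points `rn - j / D`, `1 ≤ j ≤ Bn`, and whose poles are
`0, -1, …, -n`, all of order `S`. For each divisor `d = 2 ^ u` of `D`, partial fractions turn
`∑ ν ≥ 1, R(ν / d)` into a linear form in `1` and the odd zeta values, in which `ζ(i)` has
coefficient `ρ i * d ^ i` with `ρ i` independent of `d`. Hence, following Fischler, Sprang and
Zudilin, a fixed integer combination of these `k + 1` sums eliminates any `k` prescribed zeta
values. It remains to see that the combination does not vanish and tends to zero faster than the
denominators grow. All the sums sample the same unimodal sequence `e g = R(rn + g / D)`, along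
the multiples of `D / d`; since its maximum is negligible against its sum, the sum for `d` is
asymptotically the fraction `d / D` of the sum of `e`, so the combination is a nonzero multiple of
the latter. Consequently more than `k` odd zeta values up to about `2 ^ k * k` are irrational,
which is a stronger bound on `n₁` alone than the one required of `n₁ + n₂`.
-/

open Filter Finset Topology

section PoleSpan

variable {A ι κ : Type*} [CommRing A] {y : ι → A} {K : Finset ι} {S : ℕ}

/-- The `ℤ`-span of the powers `y k ^ e` with `k ∈ K` and `1 ≤ e ≤ S`: for `y k = L / (t + k)` these
are the principal parts of order at most `S` with integral coefficients. -/
def poleSpan (y : ι → A) (K : Finset ι) (S : ℕ) : Submodule ℤ A :=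
  Submodule.span ℤ ((fun p : ι × ℕ ↦ y p.1 ^ (p.2 + 1)) '' ↑(K ×ˢ range S))

lemma pow_mem_poleSpan {k : ι} {e : ℕ} (hk : k ∈ K) (he : e < S) :
    y k ^ (e + 1) ∈ poleSpan y K S :=
  Submodule.subset_span ⟨(k, e), by simp [hk, he], rfl⟩

lemma pow_mul_mem_poleSpan
    (hy : ∀ k ∈ K, ∀ l ∈ K, k ≠ l → ∃ q : ℤ, y k * y l = q • (y k - y l))
    {k l : ι} {e : ℕ} (hk : k ∈ K) (hl : l ∈ K) (he : e < S) :
    y k ^ (e + 1) * y l ∈ poleSpan y K (S + 1) := by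
  obtain rfl | hkl := eq_or_ne k l
  · rw [← pow_succ]
    exact pow_mem_poleSpan hk (Nat.succ_lt_succ he)
  obtain ⟨q, hq⟩ := hy k hk l hl hkl
  induction e with
  | zero =>
    rw [zero_add, pow_one, hq]
    have hmem {j : ι} (hj : j ∈ K) : y j ∈ poleSpan y K (S + 1) := by
      simpa using pow_mem_poleSpan (y := y) hj S.succ_pos
    exact Submodule.smul_mem _ q (sub_mem (hmem hk) (hmem hl))
  | succ e ih =>
    have hstep : y k ^ (e + 2) * y l = q • (y k ^ (e + 2) - y k ^ (e + 1) * y l) := by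
      rw [pow_succ, mul_assoc, hq, mul_smul_comm, mul_sub]
    rw [hstep]
    exact Submodule.smul_mem _ q (sub_mem (pow_mem_poleSpan hk (by omega)) (ih (by omega)))

lemma poleSpan_mul_poleSpan_one_le
    (hy : ∀ k ∈ K, ∀ l ∈ K, k ≠ l → ∃ q : ℤ, y k * y l = q • (y k - y l)) :
    poleSpan y K S * poleSpan y K 1 ≤ poleSpan y K (S + 1) := by
  rw [poleSpan, poleSpan, Submodule.span_mul_span, Submodule.span_le]
  rintro _ ⟨_, ⟨⟨k, e⟩, hke, rfl⟩, _, ⟨⟨l, e'⟩, hle, rfl⟩, rfl⟩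
  simp only [coe_product, Set.mem_prod, mem_coe, mem_range, Nat.lt_one_iff] at hke hle
  obtain ⟨hl, rfl⟩ := hle
  simpa using pow_mul_mem_poleSpan hy hke.1 hl hke.2

lemma prod_mem_poleSpan
    (hy : ∀ k ∈ K, ∀ l ∈ K, k ≠ l → ∃ q : ℤ, y k * y l = q • (y k - y l))
    {s : Finset κ} (hs : s.Nonempty) {g : κ → A} (hg : ∀ i ∈ s, g i ∈ poleSpan y K 1) :
    ∏ i ∈ s, g i ∈ poleSpan y K #s := by
  induction hs using Nonempty.cons_induction with
  | singleton i => simpa using hg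
  | cons i s hi _ ih =>
    rw [prod_cons, card_cons, mul_comm]
    exact poleSpan_mul_poleSpan_one_le hy (Submodule.mul_mem_mul
      (ih fun j hj ↦ hg j (mem_cons_of_mem hj)) (hg i (mem_cons_self i s)))

end PoleSpan

section PartialFraction

/-- `t` is not one of the poles `0, -1, …, -n`. -/
def AvoidsPoles (n : ℕ) (t : ℝ) : Prop := ∀ k ≤ n, t + k ≠ 0

/-- The sum of the principal parts of order at most `S` at `0, -1, …, -n`. The coefficient `a k i`
belongs to the exponent `i + 1`. -/
noncomputable def partialFraction (n S : ℕ) (a : ℕ → ℕ → ℝ) (t : ℝ) : ℝ :=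
  ∑ k ∈ range (n + 1), ∑ i ∈ range S, a k i / (t + k) ^ (i + 1)

/-- The function `f` is given by the partial fraction expansion with coefficients `a`. -/
def HasPartialFraction (n S : ℕ) (f : ℝ → ℝ) (a : ℕ → ℕ → ℝ) : Prop :=
  ∀ t, AvoidsPoles n t → f t = partialFraction n S a t

/-- The function `f` is an integral linear combination of `1 / t, …, 1 / (t + n)`. -/
def HasIntegralSimplePoles (n : ℕ) (f : ℝ → ℝ) : Prop :=
  ∃ z : ℕ → ℤ, ∀ t, AvoidsPoles n t → f t = ∑ k ∈ range (n + 1), z k / (t + k)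

variable {n S : ℕ}

lemma exists_div_mul_div_eq_zsmul_sub {L : ℕ} (hL : ∀ m, 1 ≤ m → m ≤ n → m ∣ L) {k l : ℕ}
    (hk : k ≤ n) (hl : l ≤ n) (hkl : k ≠ l) :
    ∃ q : ℤ, ∀ t, AvoidsPoles n t →
      (L : ℝ) / (t + k) * (L / (t + l)) = q * (L / (t + k) - L / (t + l)) := by
  have hdvd : (l - k : ℤ) ∣ L :=
    Int.natAbs_dvd.1 (Int.natCast_dvd_natCast.2 (hL _ (by omega) (by omega)))
  obtain ⟨q, hq⟩ := hdvd
  have hqr : (L : ℝ) = (l - k) * q := mod_cast hq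
  refine ⟨q, fun t ht ↦ ?_⟩
  have hk0 := ht k hk
  have hl0 := ht l hl
  field_simp
  linear_combination (L : ℝ) * hqr

lemma HasIntegralSimplePoles.mul_mem_poleSpan {g : ℝ → ℝ} (hg : HasIntegralSimplePoles n g)
    (c : ℝ) : (fun t : {t // AvoidsPoles n t} ↦ c * g t) ∈
      poleSpan (fun (k : ℕ) (t : {t // AvoidsPoles n t}) ↦ c / (t + k)) (range (n + 1)) 1 := by
  obtain ⟨z, hz⟩ := hg
  have hsum : (fun t : {t // AvoidsPoles n t} ↦ c * g t) = ∑ k ∈ range (n + 1),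
      z k • (fun t : {t // AvoidsPoles n t} ↦ c / ((t : ℝ) + k)) ^ (0 + 1) := by
    funext t
    rw [hz t t.2, mul_sum, Finset.sum_apply]
    refine sum_congr rfl fun k _ ↦ ?_
    rw [Pi.smul_apply, zero_add, pow_one, zsmul_eq_mul]
    exact mul_div_left_comm ..
  rw [hsum]
  exact sum_mem fun k hk ↦ Submodule.smul_mem _ _
    (pow_mem_poleSpan (y := fun (k : ℕ) (t : {t // AvoidsPoles n t}) ↦ c / ((t : ℝ) + k))
      hk one_pos)

/-- Each factor `L` pays for one difference `l - k` in
`1 / ((t + k) (t + l)) = (1 / (t + k) - 1 / (t + l)) / (l - k)`. -/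
theorem exists_hasPartialFraction_prod {L T : ℕ} (hL0 : L ≠ 0)
    (hL : ∀ m, 1 ≤ m → m ≤ n → m ∣ L) {g : ℕ → ℝ → ℝ}
    (hg : ∀ b ≤ T, HasIntegralSimplePoles n (g b)) :
    ∃ a, HasPartialFraction n (T + 1) (fun t ↦ ∏ b ∈ range (T + 1), g b t) a ∧
      ∀ k i, ∃ z : ℤ, (L : ℝ) ^ T * a k i = z := by
  have hL0' : (L : ℝ) ≠ 0 := Nat.cast_ne_zero.2 hL0
  let y : ℕ → {t // AvoidsPoles n t} → ℝ := fun k t ↦ L / (t + k)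
  have hy : ∀ k ∈ range (n + 1), ∀ l ∈ range (n + 1), k ≠ l →
      ∃ q : ℤ, y k * y l = q • (y k - y l) := by
    intro k hk l hl hkl
    obtain ⟨q, hq⟩ := exists_div_mul_div_eq_zsmul_sub hL (Nat.lt_succ_iff.1 (mem_range.1 hk))
      (Nat.lt_succ_iff.1 (mem_range.1 hl)) hkl
    exact ⟨q, funext fun t ↦ by simpa [y] using hq t t.2⟩
  have hmem : ∀ b ∈ range (T + 1), (fun t : {t // AvoidsPoles n t} ↦ L * g b t) ∈
      poleSpan y (range (n + 1)) 1 :=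
    fun b hb ↦ (hg b (Nat.lt_succ_iff.1 (mem_range.1 hb))).mul_mem_poleSpan L
  have hprod := prod_mem_poleSpan hy nonempty_range_add_one hmem
  rw [card_range, poleSpan, Submodule.mem_span_image_finset_iff_exists_fun'] at hprod
  obtain ⟨z, hz⟩ := hprod
  refine ⟨fun k i ↦ z (k, i) * L ^ i / L ^ T, fun t ht ↦ ?_, fun k i ↦ ⟨z (k, i) * L ^ i, ?_⟩⟩
  · have hzt := congrFun hz ⟨t, ht⟩
    simp only [Finset.sum_apply, Finset.prod_apply, Pi.smul_apply, Pi.pow_apply, sum_product,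
      prod_mul_distrib, prod_const, card_range] at hzt
    simp only [y, zsmul_eq_mul] at hzt
    rw [← mul_right_inj' (pow_ne_zero (T + 1) hL0'), ← hzt, partialFraction, mul_sum]
    refine sum_congr rfl fun k _ ↦ ?_
    rw [mul_sum]
    refine sum_congr rfl fun i _ ↦ ?_
    rw [div_pow]
    field_simp
    ring
  · push_cast
    field_simp

end PartialFraction

section Uniqueness

variable {n S : ℕ} {a b c : ℕ → ℕ → ℝ}

lemma eventually_avoidsPoles (n : ℕ) (x : ℝ) : ∀ᶠ t in 𝓝[≠] x, AvoidsPoles n t := by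
  have hpole : ∀ k ∈ range (n + 1), ∀ᶠ t : ℝ in 𝓝[≠] x, t + k ≠ 0 := by
    intro k _
    obtain hx | hx := eq_or_ne x (-k)
    · filter_upwards [self_mem_nhdsWithin] with t ht h0
      exact ht (by rw [Set.mem_singleton_iff, hx]; exact eq_neg_of_add_eq_zero_left h0)
    · filter_upwards [eventually_ne_nhdsWithin hx] with t ht h0
      exact ht (eq_neg_of_add_eq_zero_left h0)
  filter_upwards [(eventually_all_finset _).2 hpole] with t ht k hk
  exact ht k (mem_range.2 (Nat.lt_succ_iff.2 hk))

lemma tendsto_pow_mul_partialFraction {l : ℕ} (hl : l ≤ n) :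
    Tendsto (fun t ↦ (t + l) ^ (S + 1) * partialFraction n (S + 1) a t) (𝓝[≠] (-l : ℝ))
      (𝓝 (a l S)) := by
  have hterm : ∀ k ∈ range (n + 1), ∀ i ∈ range (S + 1),
      Tendsto (fun t : ℝ ↦ (t + l) ^ (S + 1) * (a k i / (t + k) ^ (i + 1))) (𝓝[≠] (-l : ℝ))
        (𝓝 (if k = l then if i = S then a l S else 0 else 0)) := by
    intro k _ i hi
    split_ifs with hkl hiS
    · subst hkl hiS
      refine tendsto_const_nhds.congr' ?_
      filter_upwards [eventually_avoidsPoles n (-k)] with t ht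
      exact (mul_div_cancel₀ _ (pow_ne_zero _ (ht k hl))).symm
    · subst hkl
      have hiS' : i < S := lt_of_le_of_ne (Nat.lt_succ_iff.1 (mem_range.1 hi)) hiS
      have hcont : ContinuousAt (fun t : ℝ ↦ a k i * (t + k) ^ (S - i)) (-k) := by fun_prop
      have hlim : Tendsto _ (𝓝[≠] (-k : ℝ)) _ := hcont.tendsto.mono_left nhdsWithin_le_nhds
      rw [neg_add_cancel, zero_pow (Nat.sub_pos_of_lt hiS').ne', mul_zero] at hlim
      refine hlim.congr' ?_
      filter_upwards [eventually_avoidsPoles n (-k)] with t ht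
      have hsplit : (t + k) ^ (S + 1) = (t + k) ^ (S - i) * (t + k) ^ (i + 1) := by
        rw [← pow_add]
        congr 1
        omega
      have hne := ht k hl
      rw [hsplit]
      field_simp
    · have hne : (-l + k : ℝ) ≠ 0 := fun h ↦ hkl (mod_cast (neg_add_eq_zero.1 h).symm)
      have hcont : ContinuousAt
          (fun t : ℝ ↦ (t + l) ^ (S + 1) * (a k i / (t + k) ^ (i + 1))) (-l) := by
        fun_prop (disch := exact pow_ne_zero _ hne)
      have hlim : Tendsto _ (𝓝[≠] (-l : ℝ)) _ := hcont.tendsto.mono_left nhdsWithin_le_nhds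
      simpa using hlim
  have hsum := tendsto_finsetSum _ fun k hk ↦ tendsto_finsetSum _ (hterm k hk)
  simpa [partialFraction, mul_sum, Nat.lt_succ_iff, hl] using hsum

lemma coeff_eq_zero_of_partialFraction_eq_const {C : ℝ}
    (h : ∀ t, AvoidsPoles n t → partialFraction n S a t = C) {k i : ℕ} (hk : k ≤ n) (hi : i < S) :
    a k i = 0 := by
  induction S with
  | zero => omega
  | succ S ih =>
    have htop : ∀ l ≤ n, a l S = 0 := by
      intro l hl
      have hcont : ContinuousAt (fun t : ℝ ↦ (t + l) ^ (S + 1) * C) (-l) := by fun_prop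
      have hzero : Tendsto _ (𝓝[≠] (-l : ℝ)) _ := hcont.tendsto.mono_left nhdsWithin_le_nhds
      rw [neg_add_cancel, zero_pow S.succ_ne_zero, zero_mul] at hzero
      refine tendsto_nhds_unique (tendsto_pow_mul_partialFraction hl) (hzero.congr' ?_)
      filter_upwards [eventually_avoidsPoles n (-l)] with t ht
      rw [h t ht]
    obtain rfl | hiS := eq_or_ne i S
    · exact htop k hk
    refine ih (fun t ht ↦ ?_) (by omega)
    rw [← h t ht]
    refine sum_congr rfl fun l hl ↦ ?_
    rw [sum_range_succ, htop l (Nat.lt_succ_iff.1 (mem_range.1 hl)), zero_div, add_zero]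

lemma coeff_unique {C : ℝ}
    (h : ∀ t, AvoidsPoles n t → partialFraction n S a t = partialFraction n S b t + C)
    {k i : ℕ} (hk : k ≤ n) (hi : i < S) : a k i = b k i := by
  refine sub_eq_zero.1 (coeff_eq_zero_of_partialFraction_eq_const
    (a := fun k i ↦ a k i - b k i) (C := C) (fun t ht ↦ ?_) hk hi)
  rw [← sub_eq_iff_eq_add'.2 (h t ht)]
  simp only [partialFraction, sub_div, sum_sub_distrib]

lemma sum_range_shift_sub_mul_div_pow {c : ℕ → ℝ} (hc : c S = 0) (x : ℝ) {y : ℝ} (hy : y ≠ 0) :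
    ∑ i ∈ range S, (c (i + 1) - x * c i) / y ^ (i + 1) =
      (y - x) * ∑ i ∈ range S, c i / y ^ (i + 1) - c 0 := by
  have hterm (i : ℕ) : (c (i + 1) - x * c i) / y ^ (i + 1) =
      (y - x) * (c i / y ^ (i + 1)) + (c (i + 1) / y ^ (i + 1) - c i / y ^ i) := by
    field_simp
    ring
  simp_rw [hterm]
  rw [sum_add_distrib, sum_range_sub (fun i ↦ c i / y ^ i), ← mul_sum, hc]
  ring

/-- In terms of the coefficients of `g` the sum telescopes. -/
lemma sum_coeff_div_pow_eq_neg {f g : ℝ → ℝ} {x : ℝ} (hS : S ≠ 0)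
    (hf : HasPartialFraction n S f a) (hg : HasPartialFraction n S g c)
    (hfg : ∀ t, AvoidsPoles n t → f t = (t - x) * g t) {k : ℕ} (hk : k ≤ n) (hx : x + k ≠ 0) :
    ∑ i ∈ range S, a k i / (x + k) ^ (i + 1) = -c k 0 := by
  let d : ℕ → ℕ → ℝ := fun k i ↦ if i < S then c k i else 0
  have hdS (k : ℕ) : d k S = 0 := if_neg (lt_irrefl S)
  have hd0 (k : ℕ) : d k 0 = c k 0 := if_pos (Nat.pos_of_ne_zero hS)
  have hg' : HasPartialFraction n S g d := fun t ht ↦ (hg t ht).trans <|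
    sum_congr rfl fun k _ ↦ sum_congr rfl fun i hi ↦ by simp only [d, if_pos (mem_range.1 hi)]
  have hcoeff : ∀ i < S, a k i = d k (i + 1) - (x + k) * d k i := by
    intro i hi
    refine coeff_unique (b := fun k i ↦ d k (i + 1) - (x + k) * d k i)
      (C := ∑ k ∈ range (n + 1), d k 0) (fun t ht ↦ ?_) hk hi
    rw [← hf t ht, hfg t ht, hg' t ht, partialFraction, partialFraction, mul_sum,
      ← sum_add_distrib]
    refine sum_congr rfl fun l hl ↦ ?_
    rw [sum_range_shift_sub_mul_div_pow (hdS l) _ (ht l (Nat.lt_succ_iff.1 (mem_range.1 hl))),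
      sub_add_cancel, add_sub_add_right_eq_sub]
  rw [sum_congr rfl fun i hi ↦ by rw [hcoeff i (mem_range.1 hi)],
    sum_range_shift_sub_mul_div_pow (hdS k) _ hx, sub_self, zero_mul, zero_sub, hd0]

/-- Splitting off the zero `x` expresses the sum by a single coefficient of the cofactor, which
absorbs the denominators `(x + k) ^ (i + 1)`. -/
theorem exists_int_eq_pow_mul_sum_div_pow {L T : ℕ} (hL0 : L ≠ 0)
    (hL : ∀ m, 1 ≤ m → m ≤ n → m ∣ L) {g : ℕ → ℝ → ℝ} {q : ℝ → ℝ} {x : ℝ} {b k : ℕ}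
    (hg : ∀ i ≤ T, HasIntegralSimplePoles n (g i)) (hq : HasIntegralSimplePoles n q)
    (ha : HasPartialFraction n (T + 1) (fun t ↦ ∏ i ∈ range (T + 1), g i t) a) (hb : b ≤ T)
    (hgq : ∀ t, L * g b t = (t - x) * q t) (hk : k ≤ n) (hx : x + k ≠ 0) :
    ∃ z : ℤ, (L : ℝ) ^ (T + 1) * ∑ i ∈ range (T + 1), a k i / (x + k) ^ (i + 1) = z := by
  have hg' : ∀ i ≤ T, HasIntegralSimplePoles n (Function.update g b q i) := by
    intro i hi
    obtain rfl | hib := eq_or_ne i b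
    · rwa [Function.update_self]
    · rw [Function.update_of_ne hib]
      exact hg i hi
  obtain ⟨c, hc, hcL⟩ := exists_hasPartialFraction_prod hL0 hL hg'
  have ha' : HasPartialFraction n (T + 1) (fun t ↦ L * ∏ i ∈ range (T + 1), g i t)
      (fun k i ↦ L * a k i) := by
    intro t ht
    refine (congrArg ((L : ℝ) * ·) (ha t ht)).trans ?_
    simp only [partialFraction, mul_sum, mul_div_assoc]
  have hfactor : ∀ t, AvoidsPoles n t → L * ∏ i ∈ range (T + 1), g i t =
      (t - x) * ∏ i ∈ range (T + 1), Function.update g b q i t := by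
    intro t _
    have hb' : b ∈ range (T + 1) := mem_range.2 (Nat.lt_succ_of_le hb)
    rw [← mul_prod_erase _ _ hb', ← mul_prod_erase _ (fun i ↦ Function.update g b q i t) hb',
      Function.update_self, ← mul_assoc, ← mul_assoc, hgq]
    exact congrArg _ (prod_congr rfl fun i hi ↦ by rw [Function.update_of_ne (ne_of_mem_erase hi)])
  have hsum := sum_coeff_div_pow_eq_neg T.succ_ne_zero ha' hc hfactor hk hx
  simp only [mul_div_assoc, ← mul_sum] at hsum
  obtain ⟨z, hz⟩ := hcL k 0
  exact ⟨-z, by rw [pow_succ, mul_assoc, hsum, mul_neg, hz]; push_cast; rfl⟩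

end Uniqueness

section Blocks

open Polynomial

lemma prod_range_erase {M : Type*} [CommMonoid M] (f : ℕ → M) (j b : ℕ) :
    ∏ i ∈ (range (j + 1 + b)).erase j, f i =
      (∏ i ∈ range j, f i) * ∏ i ∈ range b, f (j + 1 + i) := by
  have hj : j ∈ range (j + 1 + b) := mem_range.2 (by omega)
  rw [← one_mul (∏ i ∈ _, f i), erase_eq, ← prod_update_of_mem hj f 1, prod_range_add,
    prod_range_succ, Function.update_self, mul_one, prod_update_of_notMem notMem_range_self]
  exact congrArg _ (prod_congr rfl fun i _ ↦ Function.update_of_ne (by omega) ..)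

lemma prod_range_sub_self (k : ℕ) : ∏ j ∈ range k, ((j : ℤ) - k) = (-1) ^ k * k.factorial := by
  induction k with
  | zero => simp
  | succ k ih =>
    rw [prod_range_succ', Nat.factorial_succ]
    push_cast
    simp only [add_sub_add_right_eq_sub, ih]
    ring

lemma prod_erase_sub_dvd_factorial {n k : ℕ} (hk : k ≤ n) :
    ∏ j ∈ (range (n + 1)).erase k, ((j : ℤ) - k) ∣ n.factorial := by
  obtain ⟨b, rfl⟩ := Nat.exists_eq_add_of_le hk
  have hupper : ∏ i ∈ range b, (((k + 1 + i : ℕ) : ℤ) - k) = b.factorial := by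
    rw [← prod_range_add_one_eq_factorial]
    push_cast
    exact prod_congr rfl fun i _ ↦ by ring
  rw [show k + b + 1 = k + 1 + b by ring, prod_range_erase, prod_range_sub_self, hupper, mul_assoc,
    (isUnit_one.neg.pow k).mul_left_dvd]
  exact mod_cast Nat.factorial_mul_factorial_dvd_factorial_add k b

/-- The polynomial function `t (t + 1) ⋯ (t + n)`. -/
noncomputable def poleProd (n : ℕ) (t : ℝ) : ℝ := ∏ l ∈ range (n + 1), (t + l)

variable {n : ℕ}

lemma AvoidsPoles.poleProd_ne_zero {t : ℝ} (ht : AvoidsPoles n t) : poleProd n t ≠ 0 :=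
  prod_ne_zero_iff.2 fun l hl ↦ ht l (Nat.lt_succ_iff.1 (mem_range.1 hl))

lemma nodalWeight_neg_natCast (n k : ℕ) :
    Lagrange.nodalWeight (range (n + 1)) (fun l : ℕ ↦ -(l : ℝ)) k =
      (∏ j ∈ (range (n + 1)).erase k, ((j : ℝ) - k))⁻¹ := by
  rw [Lagrange.nodalWeight, ← prod_inv_distrib]
  exact prod_congr rfl fun j _ ↦ by ring

/-- By Lagrange interpolation, the residue at `-k` is `p (-k)` divided by a divisor of `n!`. -/
lemma hasIntegralSimplePoles_aeval_div {p : ℤ[X]} (hdeg : p.natDegree ≤ n)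
    (hp : ∀ k ≤ n, (n.factorial : ℤ) ∣ p.eval (-k : ℤ)) :
    HasIntegralSimplePoles n fun t ↦ aeval t p / poleProd n t := by
  have hres : ∀ k ≤ n, ∏ j ∈ (range (n + 1)).erase k, ((j : ℤ) - k) ∣ p.eval (-k : ℤ) :=
    fun k hk ↦ (prod_erase_sub_dvd_factorial hk).trans (hp k hk)
  choose! z hz using hres
  refine ⟨z, fun t ht ↦ ?_⟩
  beta_reduce
  let v : ℕ → ℝ := fun l ↦ -(l : ℝ)
  have hv : Set.InjOn v (range (n + 1)) := fun x _ y _ h ↦ by simpa [v] using h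
  have hdeg' : (p.map (Int.castRingHom ℝ)).degree < #(range (n + 1)) := by
    rw [card_range]
    exact degree_le_natDegree.trans_lt (mod_cast Nat.lt_succ_of_le (natDegree_map_le.trans hdeg))
  have hnode : ∀ k ∈ range (n + 1), t ≠ v k := fun k hk h ↦
    ht k (Nat.lt_succ_iff.1 (mem_range.1 hk)) (by simp [h, v])
  have hnodal : poleProd n t = eval t (Lagrange.nodal (range (n + 1)) v) := by
    simp [poleProd, Lagrange.eval_nodal, v]
  rw [aeval_def, eval₂_eq_eval_map, algebraMap_int_eq, Lagrange.eq_interpolate hv hdeg',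
    Lagrange.eval_interpolate_not_at_node _ hnode, ← hnodal,
    mul_div_cancel_left₀ _ ht.poleProd_ne_zero]
  refine sum_congr rfl fun k hk ↦ ?_
  have hk' := Nat.lt_succ_iff.1 (mem_range.1 hk)
  have heval : eval (v k) (p.map (Int.castRingHom ℝ)) =
      (∏ j ∈ (range (n + 1)).erase k, ((j : ℝ) - k)) * z k := by
    rw [show v k = ((-k : ℤ) : ℝ) by simp [v], eval_intCast_map, Int.cast_id, hz k hk']
    simp
  have hne : ∏ j ∈ (range (n + 1)).erase k, ((j : ℝ) - k) ≠ 0 :=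
    prod_ne_zero_iff.2 fun j hj ↦ sub_ne_zero.2 (mod_cast ne_of_mem_erase hj)
  rw [nodalWeight_neg_natCast, heval, sub_neg_eq_add]
  have := ht k hk'
  field_simp

lemma factorial_add_succ_dvd_mul {L : ℕ} (hL : ∀ m, 1 ≤ m → m ≤ n → m ∣ L) {j b : ℕ}
    (hjb : j + 1 + b ≤ n) :
    ((j + 1 + b).factorial : ℤ) ∣ L * (j.factorial * b.factorial) := by
  induction b generalizing j with
  | zero =>
    obtain ⟨q, hq⟩ := hL (j + 1) (by omega) (by omega)
    refine ⟨q, ?_⟩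
    rw [hq, add_zero, Nat.factorial_succ]
    push_cast
    ring
  | succ b ih =>
    obtain ⟨z₁, h₁⟩ := ih (j := j) (by omega)
    obtain ⟨z₂, h₂⟩ := ih (j := j + 1) (by omega)
    refine ⟨z₁ - z₂, ?_⟩
    rw [show j + 1 + 1 + b = (j + 1 + b) + 1 by ring, Nat.factorial_succ (j + 1 + b),
      Nat.factorial_succ j] at h₂
    rw [show j + 1 + (b + 1) = (j + 1 + b) + 1 by ring, Nat.factorial_succ (j + 1 + b),
      Nat.factorial_succ b]
    push_cast at *
    linear_combination ((j : ℤ) + 1 + b + 1) * h₁ - h₂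

lemma factorial_dvd_mul_prod_erase {L : ℕ} (hL : ∀ m, 1 ≤ m → m ≤ n → m ∣ L) (c : ℤ) {j : ℕ}
    (hj : j < n) : (n.factorial : ℤ) ∣ L * ∏ i ∈ (range n).erase j, (c + i) := by
  obtain ⟨b, rfl⟩ := Nat.exists_eq_add_of_le hj
  obtain ⟨u, hu⟩ := Nat.factorial_coe_dvd_prod j c
  obtain ⟨v, hv⟩ := Nat.factorial_coe_dvd_prod b (c + j + 1)
  obtain ⟨q, hq⟩ := factorial_add_succ_dvd_mul hL le_rfl
  have hupper : ∏ i ∈ range b, (c + ((j + 1 + i : ℕ) : ℤ)) = ∏ i ∈ range b, (c + j + 1 + i) :=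
    prod_congr rfl fun i _ ↦ by push_cast; ring
  rw [prod_range_erase, hupper, hu, hv]
  exact ⟨q * u * v, by linear_combination u * v * hq⟩

/-- The product of the linear factors `D X + c + j` over `j ∈ s`. -/
noncomputable def linearBlock (D c : ℤ) (s : Finset ℕ) : ℤ[X] := ∏ j ∈ s, (C D * X + C (c + j))

lemma natDegree_linearBlock_le (D c : ℤ) (s : Finset ℕ) : (linearBlock D c s).natDegree ≤ #s :=
  (natDegree_prod_le _ _).trans ((sum_le_sum fun _ _ ↦ natDegree_linear_le).trans (by simp))

lemma eval_linearBlock (D c x : ℤ) (s : Finset ℕ) :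
    (linearBlock D c s).eval x = ∏ j ∈ s, (D * x + c + j) := by
  simp [linearBlock, eval_prod, add_assoc]

lemma aeval_linearBlock (D c : ℤ) (s : Finset ℕ) (t : ℝ) :
    aeval t (linearBlock D c s) = ∏ j ∈ s, (D * t + c + j) := by
  simp [linearBlock, map_prod, add_assoc]

lemma hasIntegralSimplePoles_linearBlock (D c : ℤ) :
    HasIntegralSimplePoles n fun t ↦ aeval t (linearBlock D c (range n)) / poleProd n t := by
  refine hasIntegralSimplePoles_aeval_div
    ((natDegree_linearBlock_le ..).trans (card_range n).le) fun k _ ↦ ?_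
  rw [eval_linearBlock]
  exact Nat.factorial_coe_dvd_prod n _

lemma hasIntegralSimplePoles_linearBlock_erase {L : ℕ} (hL : ∀ m, 1 ≤ m → m ≤ n → m ∣ L)
    (D c : ℤ) {j : ℕ} (hj : j < n) :
    HasIntegralSimplePoles n fun t ↦
      aeval t (C (L * D) * linearBlock D c ((range n).erase j)) / poleProd n t := by
  refine hasIntegralSimplePoles_aeval_div ?_ fun k _ ↦ ?_
  · refine natDegree_C_mul_le .. |>.trans (natDegree_linearBlock_le .. |>.trans ?_)
    exact (card_erase_le).trans (card_range n).le
  · rw [eval_C_mul, eval_linearBlock, mul_right_comm]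
    exact (factorial_dvd_mul_prod_erase hL _ hj).mul_right D

lemma prod_range_mul (f : ℕ → ℝ) (B n : ℕ) :
    ∏ j ∈ range (B * n), f j = ∏ b ∈ range B, ∏ j ∈ range n, f (b * n + j) := by
  induction B with
  | zero => simp
  | succ B ih => rw [Nat.succ_mul, prod_range_add, ih, prod_range_succ]

/-- The numerator of the `b`-th of the `S` blocks into which `auxFun` factors: for `b < B` it
carries `n` of the `B n` zeros, and the block `b = B` carries the zero at the centre of symmetry. -/
noncomputable def blockNum (D r B n b : ℕ) : ℤ[X] :=
  if b < B then linearBlock D (b * n + 1 - D * (r * n)) (range n)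
  else if b = B then C (n.factorial : ℤ) * (X - C (r * n : ℤ)) else C (n.factorial : ℤ)

/-- The rational function `n!^(S-B) (t - rn) ∏_{j < Bn} (D (t - rn) + j + 1) / (t)_{n+1}^S` whose
values at the points of `ℤ / D` produce the linear forms in zeta values. -/
noncomputable def auxFun (D r B n S : ℕ) (t : ℝ) : ℝ :=
  (t - r * n) * (∏ j ∈ range (B * n), (D * (t - r * n) + (j + 1))) *
    (n.factorial : ℝ) ^ (S - B) / poleProd n t ^ S

variable {D r B S : ℕ}

lemma hasIntegralSimplePoles_blockNum (hn : n ≠ 0) (b : ℕ) :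
    HasIntegralSimplePoles n fun t ↦ aeval t (blockNum D r B n b) / poleProd n t := by
  unfold blockNum
  split_ifs
  · exact hasIntegralSimplePoles_linearBlock _ _
  · refine hasIntegralSimplePoles_aeval_div ?_ fun k _ ↦ ?_
    · exact (natDegree_C_mul_le _ _).trans ((natDegree_X_sub_C _).trans_le
        (Nat.one_le_iff_ne_zero.2 hn))
    · rw [eval_C_mul]
      exact dvd_mul_right _ _
  · refine hasIntegralSimplePoles_aeval_div ((natDegree_C _).trans_le n.zero_le) fun k _ ↦ ?_
    rw [eval_C]

lemma auxFun_eq_prod (hS : B < S) (t : ℝ) :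
    auxFun D r B n S t = ∏ b ∈ range S, aeval t (blockNum D r B n b) / poleProd n t := by
  obtain ⟨m, rfl⟩ := Nat.exists_eq_add_of_lt hS
  have hzeros : ∏ b ∈ range B, aeval t (blockNum D r B n b) =
      ∏ j ∈ range (B * n), (D * (t - r * n) + (j + 1)) := by
    rw [prod_range_mul]
    refine prod_congr rfl fun b hb ↦ ?_
    rw [blockNum, if_pos (mem_range.1 hb), aeval_linearBlock]
    refine prod_congr rfl fun j _ ↦ ?_
    push_cast
    ring
  have hcentre : aeval t (blockNum D r B n B) = n.factorial * (t - r * n) := by simp [blockNum]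
  have hrest : ∏ b ∈ range m, aeval t (blockNum D r B n (B + 1 + b)) = (n.factorial : ℝ) ^ m := by
    simp [blockNum, show ∀ b, ¬ B + 1 + b < B by omega, show ∀ b, B + 1 + b ≠ B by omega]
  rw [prod_div_distrib, prod_const, card_range, auxFun, show B + m + 1 = B + 1 + m by ring,
    prod_range_add, prod_range_succ, hzeros, hcentre, hrest, show B + 1 + m - B = m + 1 by omega]
  ring

lemma exists_hasPartialFraction_auxFun (hn : n ≠ 0) (hS : B < S) {L : ℕ} (hL0 : L ≠ 0)
    (hL : ∀ m, 1 ≤ m → m ≤ n → m ∣ L) :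
    ∃ a, HasPartialFraction n S (auxFun D r B n S) a ∧ ∀ k i, ∃ z : ℤ, (L : ℝ) ^ S * a k i = z := by
  obtain ⟨T, rfl⟩ := Nat.exists_eq_succ_of_ne_zero (Nat.ne_zero_of_lt hS)
  obtain ⟨a, ha, haL⟩ := exists_hasPartialFraction_prod (T := T) hL0 hL
    fun b _ ↦ hasIntegralSimplePoles_blockNum (D := D) (r := r) (B := B) hn b
  refine ⟨a, fun t ht ↦ (auxFun_eq_prod hS t).trans (ha t ht), fun k i ↦ ?_⟩
  obtain ⟨z, hz⟩ := haL k i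
  exact ⟨L * z, by rw [pow_succ', mul_assoc, hz]; push_cast; rfl⟩

lemma exists_int_eq_sum_div_pow_of_zero {a : ℕ → ℕ → ℝ} (hD : D ≠ 0) (hS : B < S) {L : ℕ}
    (hL0 : L ≠ 0) (hL : ∀ m, 1 ≤ m → m ≤ n → m ∣ L)
    (ha : HasPartialFraction n S (auxFun D r B n S) a) {k j : ℕ} (hk : k ≤ n) (hj : j < B * n)
    {x : ℝ} (hx : x = r * n - (j + 1) / D) (hxk : x + k ≠ 0) :
    ∃ z : ℤ, (L : ℝ) ^ S * ∑ i ∈ range S, a k i / (x + k) ^ (i + 1) = z := by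
  obtain ⟨T, rfl⟩ := Nat.exists_eq_succ_of_ne_zero (Nat.ne_zero_of_lt hS)
  have hn : n ≠ 0 := fun h ↦ by simp [h] at hj
  obtain ⟨b, hb, i, hi, rfl⟩ : ∃ b < B, ∃ i < n, b * n + i = j :=
    ⟨j / n, Nat.div_lt_of_lt_mul (by rwa [mul_comm]), j % n, Nat.mod_lt j (Nat.pos_of_ne_zero hn),
      Nat.div_add_mod' j n⟩
  refine exists_int_eq_pow_mul_sum_div_pow hL0 hL (b := b)
    (fun b _ ↦ hasIntegralSimplePoles_blockNum (D := D) (r := r) (B := B) hn b)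
    (hasIntegralSimplePoles_linearBlock_erase hL D (b * n + 1 - D * (r * n)) hi)
    (fun t ht ↦ (auxFun_eq_prod hS t).symm.trans (ha t ht)) (by omega) (fun t ↦ ?_) hk hxk
  have hD' : (D : ℝ) ≠ 0 := Nat.cast_ne_zero.2 hD
  have hlinear : (D * t + (b * n + 1 - D * (r * n)) + i : ℝ) = D * (t - x) := by
    rw [hx, mul_sub, mul_sub, mul_div_cancel₀ _ hD']
    push_cast
    ring
  rw [blockNum, if_pos hb, map_mul, aeval_linearBlock, aeval_linearBlock,
    ← mul_prod_erase _ _ (mem_range.2 hi)]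
  push_cast
  rw [hlinear, aeval_C]
  push_cast
  ring

end Blocks

section ZetaSums

variable {n S : ℕ} {f : ℝ → ℝ} {a : ℕ → ℕ → ℝ}

lemma hasSum_one_div_sub_one_div_succ (M : ℕ) :
    HasSum (fun ν : ℕ ↦ 1 / ((ν : ℝ) + 1 + M) - 1 / ((ν : ℝ) + 1 + (M + 1))) (1 / (M + 1)) := by
  have hnonneg (ν : ℕ) : 0 ≤ 1 / ((ν : ℝ) + 1 + M) - 1 / ((ν : ℝ) + 1 + (M + 1)) :=
    sub_nonneg.2 (one_div_le_one_div_of_le (by positivity) (by linarith))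
  rw [hasSum_iff_tendsto_nat_of_nonneg hnonneg]
  have hpartial (N : ℕ) : ∑ ν ∈ range N, (1 / ((ν : ℝ) + 1 + M) - 1 / ((ν : ℝ) + 1 + (M + 1))) =
      1 / (M + 1) - 1 / ((N : ℝ) + (M + 1)) := by
    have htel := sum_range_sub' (fun ν : ℕ ↦ 1 / ((ν : ℝ) + (M + 1))) N
    rw [Nat.cast_zero, zero_add] at htel
    rw [← htel]
    exact sum_congr rfl fun ν _ ↦ by push_cast; ring_nf
  have hlim : Tendsto (fun N : ℕ ↦ 1 / ((N : ℝ) + (M + 1))) atTop (𝓝 0) := by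
    simp only [one_div]
    exact tendsto_inv_atTop_zero.comp
      (tendsto_atTop_add_const_right _ _ tendsto_natCast_atTop_atTop)
  simpa only [hpartial, sub_zero] using hlim.const_sub (1 / (M + 1 : ℝ))

lemma hasSum_one_div_add_sub_one_div (M : ℕ) :
    HasSum (fun ν : ℕ ↦ 1 / ((ν : ℝ) + 1 + M) - 1 / ((ν : ℝ) + 1))
      (-∑ m ∈ range M, 1 / ((m : ℝ) + 1)) := by
  induction M with
  | zero => simp
  | succ M ih =>
    rw [sum_range_succ, neg_add, ← sub_eq_add_neg]
    simpa using ih.sub (hasSum_one_div_sub_one_div_succ M)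

lemma hasSum_one_div_add_pow (M : ℕ) {s : ℕ} (hs : 2 ≤ s) :
    HasSum (fun ν : ℕ ↦ 1 / ((ν : ℝ) + 1 + M) ^ s)
      (zeta s - ∑ m ∈ range M, 1 / ((m : ℝ) + 1) ^ s) := by
  have hsummable : Summable fun ν : ℕ ↦ 1 / ((ν : ℝ) + 1) ^ s := by
    simpa using (summable_nat_add_iff 1).2 (Real.summable_one_div_nat_pow.2 hs)
  have hshift := (hasSum_nat_add_iff' M).2 hsummable.hasSum
  simpa only [zeta, Nat.cast_add, add_right_comm] using hshift

lemma hasSum_sum_mul_one_div_add_pow {s : Finset ℕ} {i : ℕ} {c : ℕ → ℝ} (M : ℕ → ℕ)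
    (hc : i = 0 → ∑ k ∈ s, c k = 0) :
    HasSum (fun ν : ℕ ↦ ∑ k ∈ s, c k * (1 / ((ν : ℝ) + 1 + M k) ^ (i + 1)))
      (∑ k ∈ s, c k * (zeta (i + 1) - ∑ m ∈ range (M k), 1 / ((m : ℝ) + 1) ^ (i + 1))) := by
  obtain rfl | hi := eq_or_ne i 0
  · have hsum := hasSum_sum fun k (_ : k ∈ s) ↦
      (hasSum_one_div_add_sub_one_div (M k)).mul_left (c k)
    simpa [mul_sub, ← sum_mul, hc rfl] using hsum
  · exact hasSum_sum fun k _ ↦ (hasSum_one_div_add_pow (M k) (by omega)).mul_left (c k)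

/-- By `hres`, the term with the junk value `zeta 1` has coefficient zero. -/
theorem hasSum_linearForm (hf : HasPartialFraction n S f a)
    (hres : ∑ k ∈ range (n + 1), a k 0 = 0) {d : ℕ} (hd : d ≠ 0) :
    HasSum (fun ν : ℕ ↦ f ((ν + 1) / d))
      (∑ i ∈ range S, (∑ k ∈ range (n + 1), a k i) * d ^ (i + 1) * zeta (i + 1) -
        ∑ k ∈ range (n + 1), ∑ m ∈ range (d * k), ∑ i ∈ range S,
          a k i / ((m + 1) / d : ℝ) ^ (i + 1)) := by
  have hd' : (d : ℝ) ≠ 0 := Nat.cast_ne_zero.2 hd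
  have hscale (k i : ℕ) (x : ℝ) :
      a k i / (x / d) ^ (i + 1) = a k i * d ^ (i + 1) * (1 / x ^ (i + 1)) := by
    rw [div_pow, div_div_eq_mul_div, mul_one_div]
  have hcoeff (i : ℕ) (hi : i = 0) : ∑ k ∈ range (n + 1), a k i * (d : ℝ) ^ (i + 1) = 0 := by
    rw [← sum_mul, hi, hres, zero_mul]
  have hsum := hasSum_sum fun i (_ : i ∈ range S) ↦
    hasSum_sum_mul_one_div_add_pow (fun k ↦ d * k) (hcoeff i)
  convert hsum using 1
  · funext ν
    rw [hf _ fun k _ ↦ by positivity, partialFraction, sum_comm]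
    refine sum_congr rfl fun i _ ↦ sum_congr rfl fun k _ ↦ ?_
    have hpoint : ((ν : ℝ) + 1) / d + k = (ν + 1 + (d * k : ℕ)) / d := by
      push_cast
      field_simp
    rw [← hscale, hpoint]
  · simp only [mul_sub, sum_sub_distrib, ← sum_mul, hscale]
    congr 1
    rw [sum_comm]
    refine sum_congr rfl fun k _ ↦ ?_
    rw [sum_comm]
    simp only [mul_sum]

lemma tendsto_mul_partialFraction :
    Tendsto (fun t ↦ t * partialFraction n S a t) atTop
      (𝓝 (∑ k ∈ range (n + 1), ∑ i ∈ range S, a k i * 0 ^ i)) := by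
  have hterm (k i : ℕ) :
      Tendsto (fun t : ℝ ↦ t * (a k i / (t + k) ^ (i + 1))) atTop (𝓝 (a k i * 0 ^ i)) := by
    have hinv : Tendsto (fun t : ℝ ↦ (t + k)⁻¹) atTop (𝓝 0) :=
      tendsto_inv_atTop_zero.comp (tendsto_atTop_add_const_right _ _ tendsto_id)
    have hone : Tendsto (fun t : ℝ ↦ 1 - k * (t + k)⁻¹) atTop (𝓝 1) := by
      simpa using (hinv.const_mul (k : ℝ)).const_sub 1
    have hlim := (hone.mul (hinv.pow i)).const_mul (a k i)
    rw [one_mul] at hlim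
    refine hlim.congr' ?_
    filter_upwards [eventually_gt_atTop 0] with t ht
    have hne : t + k ≠ 0 := by positivity
    rw [inv_pow]
    field_simp
    ring
  simp only [partialFraction, mul_sum]
  exact tendsto_finsetSum _ fun k _ ↦ tendsto_finsetSum _ fun i _ ↦ hterm k i

lemma sum_residue_eq_zero (hS : S ≠ 0) (hf : HasPartialFraction n S f a)
    (hlim : Tendsto (fun t ↦ t * f t) atTop (𝓝 0)) : ∑ k ∈ range (n + 1), a k 0 = 0 := by
  have hpf : Tendsto (fun t ↦ t * partialFraction n S a t) atTop (𝓝 0) := by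
    refine hlim.congr' ?_
    filter_upwards [eventually_gt_atTop 0] with t ht
    rw [hf t fun k _ ↦ by positivity]
  rw [← tendsto_nhds_unique tendsto_mul_partialFraction hpf]
  refine sum_congr rfl fun k _ ↦ ?_
  rw [sum_eq_single_of_mem 0 (mem_range.2 (Nat.pos_of_ne_zero hS))
    fun i _ hi ↦ by rw [zero_pow hi, mul_zero], pow_zero, mul_one]

lemma AvoidsPoles.neg_sub {t : ℝ} (ht : AvoidsPoles n t) : AvoidsPoles n (-n - t) := by
  intro k hk h
  refine ht (n - k) (n.sub_le k) ?_
  rw [Nat.cast_sub hk]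
  linarith

lemma partialFraction_neg_sub (t : ℝ) :
    partialFraction n S a (-n - t) =
      partialFraction n S (fun k i ↦ (-1) ^ (i + 1) * a (n - k) i) t := by
  rw [partialFraction, partialFraction, ← sum_range_reflect]
  refine sum_congr rfl fun k hk ↦ sum_congr rfl fun i _ ↦ ?_
  have hkn : n + 1 - 1 - k = n - k := by omega
  have hpoint : (-n - t + (n - k : ℕ) : ℝ) = -1 * (t + k) := by
    rw [Nat.cast_sub (Nat.lt_succ_iff.1 (mem_range.1 hk))]
    ring
  rw [hkn, hpoint, mul_pow]
  obtain h | h := neg_one_pow_eq_or ℝ (i + 1) <;> simp [h, neg_div, div_neg]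

lemma sum_coeff_eq_zero_of_odd (hf : HasPartialFraction n S f a) (hsymm : ∀ t, f (-n - t) = -f t)
    {i : ℕ} (hi : i < S) (hodd : Odd i) : ∑ k ∈ range (n + 1), a k i = 0 := by
  have hcoeff {k : ℕ} (hk : k ≤ n) : a (n - k) i = -a k i := by
    have := coeff_unique (C := 0) (a := fun k i ↦ (-1) ^ (i + 1) * a (n - k) i)
      (b := fun k i ↦ -a k i) (fun t ht ↦ ?_) hk hi
    · simpa [hodd.add_one.neg_one_pow] using this
    rw [← partialFraction_neg_sub, ← hf _ ht.neg_sub, hsymm, hf t ht]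
    simp [partialFraction, neg_div]
  have hreflect := sum_range_reflect (fun k ↦ a k i) (n + 1)
  rw [Nat.add_sub_cancel, sum_congr rfl fun k hk ↦ hcoeff (Nat.lt_succ_iff.1 (mem_range.1 hk)),
    sum_neg_distrib] at hreflect
  linarith

lemma poleProd_neg_sub (n : ℕ) (t : ℝ) : poleProd n (-n - t) = (-1) ^ (n + 1) * poleProd n t := by
  have hsign := prod_neg (s := range (n + 1)) fun l : ℕ ↦ t + l
  rw [card_range] at hsign
  rw [poleProd, poleProd, ← hsign, ← prod_range_reflect]
  refine prod_congr rfl fun k hk ↦ ?_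
  rw [Nat.add_sub_cancel, Nat.cast_sub (Nat.lt_succ_iff.1 (mem_range.1 hk))]
  ring

lemma neg_sub_mul_prod_range {M : ℕ} (hM : Even M) (y : ℝ) :
    (-y - M) * ∏ j ∈ range M, (-y - M + (j + 1)) = -(y * ∏ j ∈ range M, (y + (j + 1))) := by
  have hreflect : ∏ j ∈ range M, (-y - M + (j + 1)) = ∏ j ∈ range M, (y + j) := by
    have hsign : ∏ j ∈ range M, (y + j) = ∏ j ∈ range M, -(y + j) := by
      rw [prod_neg, card_range, hM.neg_one_pow, one_mul]
    rw [hsign, ← prod_range_reflect]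
    refine prod_congr rfl fun j hj ↦ ?_
    have hj' := mem_range.1 hj
    rw [Nat.cast_sub (by omega), Nat.cast_sub (by omega)]
    push_cast
    ring
  have hends := (prod_range_succ (fun j : ℕ ↦ y + (j : ℝ)) M).symm.trans (prod_range_succ' ..)
  push_cast at hends
  rw [hreflect]
  linear_combination -hends

lemma auxFun_neg_sub {D : ℕ} (hD : Even D) (hD0 : D ≠ 0) (hS : Even S) (r : ℕ) (t : ℝ) :
    auxFun D r ((2 * r + 1) * D) n S (-n - t) = -auxFun D r ((2 * r + 1) * D) n S t := by
  have hD' : (D : ℝ) ≠ 0 := Nat.cast_ne_zero.2 hD0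
  have hpoles : poleProd n (-n - t) ^ S = poleProd n t ^ S := by
    rw [poleProd_neg_sub, mul_pow, ← pow_mul, (hS.mul_left _).neg_one_pow, one_mul]
  have hzeros := neg_sub_mul_prod_range ((hD.mul_left (2 * r + 1)).mul_right n) (D * (t - r * n))
  have hy : (-(D * (t - r * n)) - ((2 * r + 1) * D * n : ℕ) : ℝ) = D * (-n - t - r * n) := by
    push_cast
    ring
  rw [hy] at hzeros
  have hzeros' := mul_left_cancel₀ hD' (((mul_assoc ..).symm.trans hzeros).trans
    ((congrArg Neg.neg (mul_assoc ..)).trans (mul_neg ..).symm))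
  rw [auxFun, auxFun, hpoles, hzeros', neg_mul, neg_div]

end ZetaSums

section Sampling

variable {e : ℕ → ℝ}

/-- A real sequence which never increases again once it has failed to increase. -/
def IsUnimodal (e : ℕ → ℝ) : Prop := ∀ ⦃g h : ℕ⦄, g ≤ h → e (g + 1) ≤ e g → e (h + 1) ≤ e h

lemma IsUnimodal.sum_abs_sub_le {M : ℝ} (he : IsUnimodal e) (hnonneg : ∀ g, 0 ≤ e g)
    (hM : ∀ g, e g ≤ M) (N : ℕ) : ∑ g ∈ range N, |e (g + 1) - e g| ≤ 2 * M := by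
  have hrise {N : ℕ} (hN : ∀ g < N, e g < e (g + 1)) :
      ∑ g ∈ range N, |e (g + 1) - e g| = e N - e 0 := by
    rw [← sum_range_sub]
    exact sum_congr rfl fun g hg ↦ abs_of_pos (sub_pos.2 (hN g (mem_range.1 hg)))
  suffices h : ∑ g ∈ range N, |e (g + 1) - e g| + e N ≤ 2 * M by linarith [hnonneg N]
  induction N with
  | zero => simpa using (hM 0).trans (le_mul_of_one_le_left ((hnonneg 0).trans (hM 0)) one_le_two)
  | succ N ih =>
    obtain hdown | hup := le_or_gt (e (N + 1)) (e N)
    · rw [sum_range_succ, abs_of_nonpos (sub_nonpos.2 hdown)]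
      linarith
    · have hbefore : ∀ g < N + 1, e g < e (g + 1) := fun g hg ↦
        lt_of_not_ge fun hg' ↦ hup.not_ge (he (Nat.lt_succ_iff.1 hg) hg')
      rw [hrise hbefore]
      linarith [hnonneg 0, hM (N + 1)]

lemma abs_sum_range_sub_mul_le (e : ℕ → ℝ) (l : ℕ) :
    |∑ i ∈ range l, e i - l * e 0| ≤ l * ∑ i ∈ range l, |e (i + 1) - e i| := by
  have hterm : ∀ i ∈ range l, |e i - e 0| ≤ ∑ j ∈ range l, |e (j + 1) - e j| := by
    intro i hi
    rw [← sum_range_sub]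
    exact (abs_sum_le_sum_abs _ _).trans (sum_le_sum_of_subset_of_nonneg
      (range_subset_range.2 (mem_range.1 hi).le) fun _ _ _ ↦ abs_nonneg _)
  calc |∑ i ∈ range l, e i - l * e 0| = |∑ i ∈ range l, (e i - e 0)| := by simp
    _ ≤ ∑ i ∈ range l, |e i - e 0| := abs_sum_le_sum_abs _ _
    _ ≤ ∑ _i ∈ range l, ∑ j ∈ range l, |e (j + 1) - e j| := sum_le_sum hterm
    _ = l * ∑ i ∈ range l, |e (i + 1) - e i| := by simp

lemma abs_sum_range_mul_sub_mul_sum_le (e : ℕ → ℝ) (l N : ℕ) :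
    |∑ i ∈ range (l * N), e i - l * ∑ g ∈ range N, e (l * g)| ≤
      l * ∑ i ∈ range (l * N), |e (i + 1) - e i| := by
  induction N with
  | zero => simp
  | succ N ih =>
    have hblock := abs_sum_range_sub_mul_le (fun i ↦ e (l * N + i)) l
    rw [mul_add_one, sum_range_add, sum_range_add fun i ↦ |e (i + 1) - e i|, sum_range_succ,
      mul_add, mul_add, add_sub_add_comm]
    exact (abs_add_le _ _).trans (add_le_add ih hblock)

lemma abs_tsum_mul_sub_tsum_div_le (he : Summable e) {l : ℕ} (hl : l ≠ 0) {V : ℝ}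
    (hV : ∀ N, ∑ g ∈ range N, |e (g + 1) - e g| ≤ V) :
    |∑' g, e (l * g) - (∑' g, e g) / l| ≤ V := by
  have hl' : (0 : ℝ) < l := mod_cast Nat.pos_of_ne_zero hl
  have hsample : Summable fun g ↦ e (l * g) := he.comp_injective (mul_right_injective₀ hl)
  have hlim : Tendsto (fun N ↦ |∑ i ∈ range (l * N), e i - l * ∑ g ∈ range N, e (l * g)|) atTop
      (𝓝 |∑' g, e g - l * ∑' g, e (l * g)|) :=
    ((he.hasSum.tendsto_sum_nat.comp (tendsto_id.const_mul_atTop' (Nat.pos_of_ne_zero hl))).sub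
      (hsample.hasSum.tendsto_sum_nat.const_mul _)).abs
  have hbound := le_of_tendsto' hlim fun N ↦
    (abs_sum_range_mul_sub_mul_sum_le e l N).trans (mul_le_mul_of_nonneg_left (hV _) hl'.le)
  rwa [abs_sub_comm, ← mul_div_cancel₀ (∑' g, e g) hl'.ne', ← mul_sub, abs_mul,
    abs_of_pos hl', mul_le_mul_iff_right₀ hl'] at hbound

lemma one_sub_mul_mul_le_of_one_sub_mul_le {η : ℝ} (hη : η ≤ 1) (he : 0 ≤ e 0) {K : ℕ}
    (hstep : ∀ i < K, (1 - η) * e i ≤ e (i + 1)) {i : ℕ} (hi : i ≤ K) :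
    (1 - i * η) * e 0 ≤ e i := by
  induction i with
  | zero => simp
  | succ i ih =>
    have hprod : (1 - η) * ((1 - i * η) * e 0) ≤ (1 - η) * e i :=
      mul_le_mul_of_nonneg_left (ih (by omega)) (sub_nonneg.2 hη)
    have hdrop : 0 ≤ i * η ^ 2 * e 0 := by positivity
    push_cast
    linarith [hstep i hi]

lemma mul_le_two_mul_tsum_of_mul_le (he : Summable e) (hnonneg : ∀ g, 0 ≤ e g) {M K : ℕ}
    (hM : 2 * K * (K + 1) ≤ M) (hstep : ∀ g, M ≤ g → (M - 1 : ℝ) * e g ≤ g * e (g + 1)) :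
    K * e M ≤ 2 * ∑' g, e g := by
  have hM' : (2 * K * (K + 1) : ℝ) ≤ M := mod_cast hM
  obtain rfl | hK := eq_or_ne K 0
  · simpa using tsum_nonneg hnonneg
  have hden : (0 : ℝ) < M + K := by positivity
  have hη : (K + 1 : ℝ) / (M + K) ≤ 1 := by
    have : (1 : ℝ) ≤ K := Nat.one_le_cast.2 (Nat.pos_of_ne_zero hK)
    rw [div_le_one hden]
    nlinarith
  have hhalf : ∀ i ∈ range K, e M / 2 ≤ e (M + i) := by
    intro i hi
    have hi' : (i : ℝ) ≤ K := mod_cast (mem_range.1 hi).le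
    refine le_trans ?_ (one_sub_mul_mul_le_of_one_sub_mul_le (e := fun i ↦ e (M + i)) hη
      (hnonneg _) (fun j hj ↦ ?_) (mem_range.1 hi).le)
    · have hloss : (i : ℝ) * ((K + 1) / (M + K)) ≤ 1 / 2 := by
        rw [mul_div_assoc', div_le_div_iff₀ hden two_pos]
        nlinarith
      rw [add_zero]
      nlinarith [hnonneg M]
    · have hj' : (j : ℝ) ≤ K := mod_cast hj.le
      have hstep' := hstep (M + j) (M.le_add_right j)
      rw [one_sub_div hden.ne', div_mul_eq_mul_div, div_le_iff₀ hden, ← add_assoc]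
      push_cast at hstep'
      nlinarith [hnonneg (M + j + 1)]
  have hsum := sum_le_sum hhalf
  rw [sum_const, card_range, nsmul_eq_mul] at hsum
  have hpart : ∑ i ∈ range K, e (M + i) ≤ ∑' i, e (M + i) :=
    (he.comp_injective (add_right_injective M)).sum_le_tsum _ fun i _ ↦ hnonneg (M + i)
  have htail : ∑' i, e (M + i) ≤ ∑' g, e g :=
    tsum_comp_le_tsum_of_inj he hnonneg (add_right_injective M)
  linarith

end Sampling

section Logarithms

open Real

lemma log_div_le_sub_div_sqrt_mul {x y : ℝ} (hy : 0 < y) (hxy : y ≤ x) :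
    log (x / y) ≤ (x - y) / √(x * y) := by
  have hx : 0 < x := hy.trans_le hxy
  set u := √(x / y)
  have hu : 0 < u := sqrt_pos.2 (by positivity)
  have hux : u ^ 2 * y = x := by rw [sq_sqrt (by positivity), div_mul_cancel₀ _ hy.ne']
  have hsqrt : √(x * y) = u * y := by
    rw [← hux, mul_assoc, ← sq, ← mul_pow, sqrt_sq (by positivity)]
  have hsinh := self_le_sinh_iff.2 (log_nonneg (one_le_sqrt.2 ((one_le_div hy).2 hxy)))
  rw [sinh_log hu, log_sqrt (by positivity)] at hsinh
  calc log (x / y) ≤ u - u⁻¹ := by linarith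
    _ = (x - y) / √(x * y) := by rw [hsqrt, ← hux]; field_simp

lemma mul_log_one_add_div_le {x y h : ℝ} (hx : 0 < x) (hxy : x ≤ y) (hh : 0 ≤ h) :
    x * log (1 + h / x) ≤ y * log (1 + h / y) := by
  have hy : 0 < y := hx.trans_le hxy
  have hbernoulli : 1 + h / x ≤ (1 + h / y) ^ (y / x) := by
    have := one_add_mul_self_le_rpow_one_add (s := h / y)
      (neg_one_lt_zero.le.trans (by positivity)) ((one_le_div hx).2 hxy)
    rwa [div_mul_div_cancel₀' hy.ne'] at this
  have hlog := log_le_log (by positivity) hbernoulli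
  rw [log_rpow (by positivity), div_mul_eq_mul_div, le_div_iff₀ hx] at hlog
  linarith

lemma antitoneOn_mul_log_div {α β T : ℝ} (hα : 0 ≤ α) (hβ : 0 ≤ β) (hαβ : β ≤ α)
    (hT : T * (α - β) ≤ α * β) :
    AntitoneOn (fun t ↦ t * log ((t + α) / (t - β))) (Set.Ioc β T) := by
  have hderiv (t : ℝ) (ht : β < t) : HasDerivAt (fun t ↦ t * log ((t + α) / (t - β)))
      (log ((t + α) / (t - β)) - t * ((t + α) - (t - β)) / ((t + α) * (t - β))) t := by
    have hx : t + α ≠ 0 := by linarith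
    have hy : t - β ≠ 0 := by linarith
    have hquot := ((hasDerivAt_id t).add_const α).div ((hasDerivAt_id t).sub_const β) hy
    refine ((hasDerivAt_id t).mul (hquot.log (div_ne_zero hx hy))).congr_deriv ?_
    simp only [id, Pi.div_apply]
    field_simp
    ring
  refine antitoneOn_of_hasDerivWithinAt_nonpos (convex_Ioc β T)
    (fun t ht ↦ (hderiv t ht.1).continuousAt.continuousWithinAt)
    (fun t ht ↦ (hderiv t (interior_subset ht).1).hasDerivWithinAt) fun t ht ↦ ?_
  obtain ⟨hβt, htT⟩ := interior_subset ht
  have hx : 0 < t + α := by linarith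
  have hy : 0 < t - β := by linarith
  have hmean : √((t + α) * (t - β)) ≤ t := by
    refine sqrt_le_iff.2 ⟨by linarith, ?_⟩
    nlinarith
  refine sub_nonpos.2 ((log_div_le_sub_div_sqrt_mul hy (by linarith)).trans ?_)
  rw [div_le_div_iff₀ (by positivity) (by positivity)]
  nth_rw 1 [← mul_self_sqrt (by positivity : 0 ≤ (t + α) * (t - β))]
  have hdiff : 0 ≤ t + α - (t - β) := by linarith
  calc _ = (t + α - (t - β)) * √((t + α) * (t - β)) * √((t + α) * (t - β)) := by ring
    _ ≤ (t + α - (t - β)) * t * √((t + α) * (t - β)) := by gcongr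
    _ = _ := by ring

lemma poleProd_pos {n : ℕ} {t : ℝ} (ht : 0 < t) : 0 < poleProd n t :=
  prod_pos fun l _ ↦ by positivity

lemma poleProd_add_div_poleProd {n : ℕ} {t : ℝ} (ht : 0 < t) (h : ℝ) :
    poleProd n (t + h) / poleProd n t = ∏ l ∈ range (n + 1), (1 + h / (t + l)) := by
  rw [poleProd, poleProd, ← prod_div_distrib]
  refine prod_congr rfl fun l _ ↦ ?_
  have : t + l ≠ 0 := by positivity
  field_simp
  ring

lemma monotoneOn_mul_log_poleProd_div (n : ℕ) {h : ℝ} (hh : 0 ≤ h) :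
    MonotoneOn (fun t ↦ t * log (poleProd n (t + h) / poleProd n t)) (Set.Ioi 0) := by
  have hlog (t : ℝ) (ht : 0 < t) : t * log (poleProd n (t + h) / poleProd n t) =
      ∑ l ∈ range (n + 1), t / (t + l) * ((t + l) * log (1 + h / (t + l))) := by
    rw [poleProd_add_div_poleProd ht, log_prod fun l _ ↦ by positivity, mul_sum]
    refine sum_congr rfl fun l _ ↦ ?_
    rw [← mul_assoc, div_mul_cancel₀ _ (by positivity)]
  intro t (ht : 0 < t) u (hu : 0 < u) htu
  beta_reduce
  rw [hlog t ht, hlog u hu]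
  refine sum_le_sum fun l _ ↦ mul_le_mul ?_ ?_ ?_ (by positivity)
  · rw [div_le_div_iff₀ (by positivity) (by positivity)]
    nlinarith [l.cast_nonneg (α := ℝ)]
  · exact mul_log_one_add_div_le (by positivity) (by linarith) hh
  · exact mul_nonneg (by positivity) (log_nonneg (le_add_of_nonneg_right (by positivity)))

end Logarithms

section GridValues

variable {D r B n S : ℕ}

/-- The value of `auxFun` at the `g`-th point of `ℤ / D` to the right of its central zero `r n`. -/
noncomputable def gridValue (D r B n S g : ℕ) : ℝ := auxFun D r B n S (r * n + g / D)

lemma gridValue_eq (hD : D ≠ 0) (g : ℕ) :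
    gridValue D r B n S g =
      g / D * (∏ j ∈ range (B * n), ((g : ℝ) + (j + 1))) * n.factorial ^ (S - B) /
        poleProd n (r * n + g / D) ^ S := by
  have hD' : (D : ℝ) ≠ 0 := Nat.cast_ne_zero.2 hD
  rw [gridValue, auxFun, add_sub_cancel_left, mul_div_cancel₀ _ hD']

lemma gridValue_zero : gridValue D r B n S 0 = 0 := by simp [gridValue, auxFun]

lemma gridPoint_pos (hr : r ≠ 0) (hn : n ≠ 0) (D g : ℕ) : (0 : ℝ) < r * n + g / D := by
  positivity

lemma gridValue_pos (hD : D ≠ 0) (hr : r ≠ 0) (hn : n ≠ 0) {g : ℕ} (hg : g ≠ 0) :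
    0 < gridValue D r B n S g := by
  rw [gridValue_eq hD]
  have := poleProd_pos (n := n) (gridPoint_pos hr hn D g)
  positivity

lemma gridValue_nonneg (hD : D ≠ 0) (hr : r ≠ 0) (hn : n ≠ 0) (g : ℕ) :
    0 ≤ gridValue D r B n S g := by
  obtain rfl | hg := eq_or_ne g 0
  · exact gridValue_zero.ge
  · exact (gridValue_pos hD hr hn hg).le

/-- The ratio `g * e (g + 1) / e g` of consecutive values of `e = gridValue D r B n S`. -/
noncomputable def stepWeight (D r B n S g : ℕ) : ℝ :=
  (g + 1 + B * n) * (poleProd n (r * n + g / D) / poleProd n (r * n + g / D + 1 / D)) ^ S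

lemma natCast_mul_gridValue_succ (hD : D ≠ 0) (hr : r ≠ 0) (hn : n ≠ 0) (g : ℕ) :
    g * gridValue D r B n S (g + 1) = stepWeight D r B n S g * gridValue D r B n S g := by
  have hshift : ((g : ℝ) + 1) * ∏ j ∈ range (B * n), ((g : ℝ) + 1 + (j + 1)) =
      (∏ j ∈ range (B * n), ((g : ℝ) + (j + 1))) * (g + 1 + B * n) := by
    have hends := (prod_range_succ' (fun j : ℕ ↦ (g : ℝ) + (j + 1)) (B * n)).symm.trans
      (prod_range_succ ..)
    push_cast at hends
    rw [show (g : ℝ) + 1 + B * n = g + (B * n + 1) by ring, ← hends, mul_comm, zero_add]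
    exact congrArg (· * _) (prod_congr rfl fun j _ ↦ by ring)
  have hpoint : (r * n + ((g + 1 : ℕ) : ℝ) / D) = r * n + g / D + 1 / D := by
    rw [Nat.cast_add_one, add_div, add_assoc]
  have hpos := poleProd_pos (n := n) (gridPoint_pos hr hn D g)
  have hpos' := poleProd_pos (n := n) (gridPoint_pos hr hn D (g + 1))
  rw [gridValue_eq hD, gridValue_eq hD, stepWeight]
  rw [hpoint] at hpos' ⊢
  generalize poleProd n (r * n + g / D) = p at *
  generalize poleProd n (r * n + g / D + 1 / D) = p' at *
  rw [Nat.cast_add_one, div_pow]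
  field_simp
  linear_combination g * hshift

lemma poleProd_div_poleProd_add_mono {h : ℝ} (hh : 0 ≤ h) :
    MonotoneOn (fun t ↦ poleProd n t / poleProd n (t + h)) (Set.Ioi 0) := by
  intro t (ht : 0 < t) u (hu : 0 < u) htu
  beta_reduce
  simp only [poleProd, ← prod_div_distrib]
  refine prod_le_prod (fun l _ ↦ by positivity) fun l _ ↦ ?_
  rw [div_le_div_iff₀ (by positivity) (by positivity)]
  nlinarith

lemma stepWeight_mono (hr : r ≠ 0) (hn : n ≠ 0) : Monotone (stepWeight D r B n S) := by
  intro g h hgh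
  have hgh' : (g : ℝ) ≤ h := mod_cast hgh
  have hpos := gridPoint_pos hr hn D g
  have hquot : 0 ≤ poleProd n (r * n + g / D) / poleProd n (r * n + g / D + 1 / D) :=
    (div_pos (poleProd_pos hpos) (poleProd_pos (by positivity))).le
  have hmono := poleProd_div_poleProd_add_mono (n := n) (h := 1 / D) (by positivity) hpos
    (gridPoint_pos hr hn D h) (by gcongr)
  unfold stepWeight
  gcongr

lemma gridValue_succ_le_iff (hD : D ≠ 0) (hr : r ≠ 0) (hn : n ≠ 0) {g : ℕ} (hg : g ≠ 0) :
    gridValue D r B n S (g + 1) ≤ gridValue D r B n S g ↔ stepWeight D r B n S g ≤ g := by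
  rw [← mul_le_mul_iff_right₀ (a := (g : ℝ)) (by positivity), natCast_mul_gridValue_succ hD hr hn,
    mul_le_mul_iff_left₀ (gridValue_pos hD hr hn hg)]

lemma poleProd_add_one_mul_self (n : ℕ) (t : ℝ) :
    poleProd n (t + 1) * t = poleProd n t * (t + n + 1) := by
  have hends := (prod_range_succ' (fun l : ℕ ↦ t + l) (n + 1)).symm.trans (prod_range_succ ..)
  simp only [Nat.cast_add, Nat.cast_one, Nat.cast_zero, add_zero, ← add_assoc] at hends
  simpa only [poleProd, add_right_comm] using hends

lemma div_le_poleProd_div_poleProd_add {t h : ℝ} (ht : 0 < t) (hh₀ : 0 ≤ h) (hh₁ : h ≤ 1) :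
    t / (t + n + 1) ≤ poleProd n t / poleProd n (t + h) := by
  have hmono : poleProd n (t + h) ≤ poleProd n (t + 1) :=
    prod_le_prod (fun l _ ↦ by positivity) fun l _ ↦ by gcongr
  rw [div_le_div_iff₀ (by positivity) (poleProd_pos (by positivity)),
    ← poleProd_add_one_mul_self, mul_comm]
  gcongr

lemma lt_stepWeight (hD : D ≠ 0) (hr : r ≠ 0) (hn : n ≠ 0) {g : ℕ} (hg : g * 3 ^ S ≤ B * n) :
    (g : ℝ) < stepWeight D r B n S g := by
  have hpos := gridPoint_pos hr hn D g
  have hthird : (1 / 3 : ℝ) ≤ poleProd n (r * n + g / D) / poleProd n (r * n + g / D + 1 / D) := by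
    refine le_trans ?_ (div_le_poleProd_div_poleProd_add hpos (by positivity) ?_)
    · have hr' : (1 : ℝ) ≤ r := Nat.one_le_cast.2 (Nat.pos_of_ne_zero hr)
      have hn' : (1 : ℝ) ≤ n := Nat.one_le_cast.2 (Nat.pos_of_ne_zero hn)
      have hg : (0 : ℝ) ≤ g / D := by positivity
      rw [div_le_div_iff₀ (by norm_num) (by positivity)]
      nlinarith
    · exact div_le_one_of_le₀ (Nat.one_le_cast.2 (Nat.pos_of_ne_zero hD)) D.cast_nonneg
  have hg' : (g : ℝ) * 3 ^ S ≤ B * n := mod_cast hg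
  calc (g : ℝ) ≤ B * n * (1 / 3) ^ S := by
        rwa [one_div, inv_pow, ← div_eq_mul_inv, le_div_iff₀ (by positivity)]
    _ < (g + 1 + B * n) * (1 / 3) ^ S := by gcongr; linarith [g.cast_nonneg (α := ℝ)]
    _ ≤ stepWeight D r B n S g := by unfold stepWeight; gcongr

lemma one_add_mul_le_poleProd_div_pow {t h : ℝ} (ht : 0 < t) (hh : 0 ≤ h) (S : ℕ) :
    1 + (n + 1) * S * (h / (t + n)) ≤ (poleProd n (t + h) / poleProd n t) ^ S := by
  have hfactor : (1 + h / (t + n)) ^ (n + 1) ≤ poleProd n (t + h) / poleProd n t := by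
    rw [poleProd_add_div_poleProd ht, ← card_range (n + 1), ← prod_const, card_range]
    refine prod_le_prod (fun l _ ↦ by positivity) fun l hl ↦ ?_
    have : (l : ℝ) ≤ n := mod_cast Nat.lt_succ_iff.1 (mem_range.1 hl)
    gcongr
  have hquot : 0 ≤ h / (t + n) := by positivity
  have hbernoulli := one_add_mul_le_pow (by linarith : -2 ≤ h / (t + n)) ((n + 1) * S)
  rw [pow_mul] at hbernoulli
  push_cast at hbernoulli
  exact hbernoulli.trans (pow_le_pow_left₀ (by positivity) hfactor S)

lemma stepWeight_le_iff (hr : r ≠ 0) (hn : n ≠ 0) (g : ℕ) (x : ℝ) :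
    stepWeight D r B n S g ≤ x ↔ (g + 1 + B * n : ℝ) ≤
      x * (poleProd n (r * n + g / D + 1 / D) / poleProd n (r * n + g / D)) ^ S := by
  have hpos := poleProd_pos (n := n) (gridPoint_pos hr hn D g)
  have hpos' := poleProd_pos (n := n)
    (add_pos_of_pos_of_nonneg (gridPoint_pos hr hn D g) (by positivity : 0 ≤ 1 / (D : ℝ)))
  rw [stepWeight, ← inv_div, inv_pow, ← div_eq_mul_inv, div_le_iff₀ (by positivity)]

lemma stepWeight_le_self_of_two_mul_add_one_mul_le (hD : D ≠ 0) (hr : r ≠ 0) (hn : n ≠ 0)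
    (hB : B ≠ 0) (hS : 2 * B ≤ S) {g : ℕ} (hg : (2 * r + 1) * n ≤ (r * n + g / D : ℝ)) :
    stepWeight D r B n S g ≤ g := by
  have ht := gridPoint_pos hr hn D g
  have hpoles := one_add_mul_le_poleProd_div_pow (n := n) ht (by positivity : 0 ≤ 1 / (D : ℝ)) S
  refine (stepWeight_le_iff hr hn g g).2 (le_trans ?_
    (mul_le_mul_of_nonneg_left hpoles g.cast_nonneg))
  set t : ℝ := r * n + g / D
  have hD' : (D : ℝ) ≠ 0 := Nat.cast_ne_zero.2 hD
  have hgt : (g : ℝ) = D * (t - r * n) := by rw [add_sub_cancel_left, mul_div_cancel₀ _ hD']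
  have hdist : 0 ≤ t - r * n := by rw [add_sub_cancel_left]; positivity
  have hhalf : t + n ≤ 2 * (t - r * n) := by linarith
  have hB' : (1 : ℝ) ≤ B := Nat.one_le_cast.2 (Nat.pos_of_ne_zero hB)
  have hS' : (2 * B : ℝ) ≤ S := mod_cast hS
  have hzeros : (1 + B * n) * (t + n) ≤ (t - r * n) * ((n + 1) * S) := calc
    _ ≤ ((n + 1) * B) * (2 * (t - r * n)) := by gcongr; linarith
    _ = (t - r * n) * ((n + 1) * (2 * B)) := by ring
    _ ≤ _ := by gcongr
  have hquot : g * ((n + 1) * S * (1 / D / (t + n))) = (t - r * n) * ((n + 1) * S) / (t + n) := by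
    rw [hgt]
    field_simp
  rw [mul_add, mul_one, add_assoc, hquot]
  gcongr
  exact (le_div_iff₀ (by positivity)).2 hzeros

lemma stepWeight_le_self_iff (hD : D ≠ 0) (hr : r ≠ 0) (hn : n ≠ 0) {g : ℕ} (hg : g ≠ 0) {t : ℝ}
    (ht : t = r * n + g / D) :
    stepWeight D r ((2 * r + 1) * D) n S g ≤ g ↔
      t * Real.log ((t + ((r + 1) * n + 1 / D)) / (t - r * n)) ≤
        S * (t * Real.log (poleProd n (t + 1 / D) / poleProd n t)) := by
  have hD' : (D : ℝ) ≠ 0 := Nat.cast_ne_zero.2 hD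
  have htpos : 0 < t := ht ▸ gridPoint_pos hr hn D g
  have hquotpos : 0 < poleProd n (t + 1 / D) / poleProd n t :=
    div_pos (poleProd_pos (add_pos_of_pos_of_nonneg htpos (by positivity))) (poleProd_pos htpos)
  have hquot : (t + ((r + 1) * n + 1 / D)) / (t - r * n) =
      (g + 1 + ((2 * r + 1) * D : ℕ) * n) / g := by
    rw [ht, add_sub_cancel_left, div_div_eq_mul_div]
    push_cast
    field_simp
    ring
  rw [mul_left_comm, mul_le_mul_iff_right₀ htpos, ← Real.log_pow, hquot,
    Real.log_le_log_iff (by positivity) (by positivity), stepWeight_le_iff hr hn, ← ht,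
    div_le_iff₀' (by positivity)]

lemma stepWeight_le_self_of_le (hD : D ≠ 0) (hr : 3 ≤ r) (hn : n ≠ 0)
    (hS : 2 * ((2 * r + 1) * D) ≤ S) {g h : ℕ} (hg : g ≠ 0) (hgh : g ≤ h)
    (hle : stepWeight D r ((2 * r + 1) * D) n S g ≤ g) :
    stepWeight D r ((2 * r + 1) * D) n S h ≤ h := by
  have hr₀ : r ≠ 0 := by omega
  obtain hfar | hnear := le_total ((2 * r + 1) * n : ℝ) (r * n + h / D)
  · exact stepWeight_le_self_of_two_mul_add_one_mul_le hD hr₀ hn (by positivity) hS hfar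
  have hr' : (3 : ℝ) ≤ r := mod_cast hr
  have hn' : (1 : ℝ) ≤ n := Nat.one_le_cast.2 (Nat.pos_of_ne_zero hn)
  have hD' : (0 : ℝ) < 1 / D := by positivity
  have hD₁ : 1 / (D : ℝ) ≤ 1 :=
    div_le_one_of_le₀ (Nat.one_le_cast.2 (Nat.pos_of_ne_zero hD)) D.cast_nonneg
  have hrange : ((2 * r + 1) * n : ℝ) * ((r + 1) * n + 1 / D - r * n) ≤
      ((r + 1) * n + 1 / D) * (r * n) := by
    have hquad : (r + 1 : ℝ) ≤ r * r - r - 1 := by nlinarith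
    have : (r + 1) * (1 / D : ℝ) ≤ (r * r - r - 1) * n := calc
      (r + 1) * (1 / D : ℝ) ≤ (r * r - r - 1) * 1 := by gcongr; linarith
      _ ≤ (r * r - r - 1) * n := by gcongr; linarith
    linarith [mul_le_mul_of_nonneg_right this n.cast_nonneg]
  have hgh' : (r * n + g / D : ℝ) ≤ r * n + h / D := by gcongr
  have hgpos : (r * n : ℝ) < r * n + g / D := lt_add_of_pos_right _ (by positivity)
  have hzeros := antitoneOn_mul_log_div (by positivity) (by positivity) (by nlinarith) hrange
    ⟨hgpos, hgh'.trans hnear⟩ ⟨hgpos.trans_le hgh', hnear⟩ hgh'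
  have hpoles := monotoneOn_mul_log_poleProd_div n hD'.le (gridPoint_pos hr₀ hn D g)
    (gridPoint_pos hr₀ hn D h) hgh'
  rw [stepWeight_le_self_iff hD hr₀ hn hg rfl] at hle
  rw [stepWeight_le_self_iff hD hr₀ hn (by omega) rfl]
  exact hzeros.trans (hle.trans (mul_le_mul_of_nonneg_left hpoles S.cast_nonneg))

theorem isUnimodal_gridValue (hD : D ≠ 0) (hr : 3 ≤ r) (hn : n ≠ 0)
    (hS : 2 * ((2 * r + 1) * D) ≤ S) : IsUnimodal (gridValue D r ((2 * r + 1) * D) n S) := by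
  have hr₀ : r ≠ 0 := by omega
  intro g h hgh hle
  obtain rfl | hg := eq_or_ne g 0
  · exact absurd (hle.trans gridValue_zero.le) (gridValue_pos hD hr₀ hn one_ne_zero).not_ge
  · rw [gridValue_succ_le_iff hD hr₀ hn hg] at hle
    rw [gridValue_succ_le_iff hD hr₀ hn (by omega)]
    exact stepWeight_le_self_of_le hD hr hn hS hg hgh hle

lemma prod_range_le_pow_mul (hr : r ≠ 0) {t : ℝ} (ht : r * n ≤ t) :
    ∏ j ∈ range (B * n), (D * (t - r * n) + (j + 1)) ≤ ((D + B) * t) ^ (B * n) := by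
  have hnt : (n : ℝ) ≤ t := le_trans (le_mul_of_one_le_left n.cast_nonneg
    (Nat.one_le_cast.2 (Nat.pos_of_ne_zero hr))) ht
  rw [pow_eq_prod_const]
  refine prod_le_prod (fun j _ ↦ ?_) fun j hj ↦ ?_
  · exact add_nonneg (mul_nonneg D.cast_nonneg (sub_nonneg.2 ht)) (by positivity)
  have hj' : (j + 1 : ℝ) ≤ B * n := mod_cast mem_range.1 hj
  have hBn : (B * n : ℝ) ≤ B * t := by gcongr
  have hDrn : (0 : ℝ) ≤ D * (r * n) := by positivity
  linarith

lemma auxFun_nonneg {t : ℝ} (ht : r * n ≤ t) : 0 ≤ auxFun D r B n S t := by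
  have ht₀ : 0 ≤ t := le_trans (by positivity) ht
  have hdist := sub_nonneg.2 ht
  exact div_nonneg (mul_nonneg (mul_nonneg hdist (prod_nonneg fun j _ ↦
      add_nonneg (mul_nonneg D.cast_nonneg hdist) (by positivity))) (by positivity))
    (pow_nonneg (prod_nonneg fun k _ ↦ by positivity) S)

lemma auxFun_le (hr : r ≠ 0) (hn : n ≠ 0) (hS : B ≤ S) {t : ℝ} (ht : r * n ≤ t) :
    auxFun D r B n S t ≤ ((D + B) ^ B / (r + 1) ^ (S - B) : ℝ) ^ n * (t / t ^ S) := by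
  have ht₀ : 0 < t := lt_of_lt_of_le (by positivity) ht
  have _ : 0 ≤ t - r * n := sub_nonneg.2 ht
  set P := ∏ l ∈ range n, (t + (l + 1))
  have hP : 0 < P := prod_pos fun l _ ↦ by positivity
  have hpoles : poleProd n t = P * t := by simp [poleProd, prod_range_succ', P]
  have hfactorial : (n.factorial : ℝ) * (r + 1) ^ n ≤ P := by
    rw [← prod_range_add_one_eq_factorial, Nat.cast_prod, pow_eq_prod_const, ← prod_mul_distrib]
    refine prod_le_prod (fun j _ ↦ by positivity) fun j hj ↦ ?_
    have hj' : (j + 1 : ℝ) ≤ n := mod_cast mem_range.1 hj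
    have hrj : (r * (j + 1) : ℝ) ≤ r * n := by gcongr
    push_cast
    linarith
  have hpow : t ^ n ≤ P := by
    rw [pow_eq_prod_const]
    exact prod_le_prod (fun j _ ↦ ht₀.le) fun j _ ↦ le_add_of_nonneg_right (by positivity)
  have hsplit : P ^ S = P ^ B * P ^ (S - B) := by rw [← pow_add, Nat.add_sub_cancel' hS]
  rw [auxFun, hpoles, mul_pow, div_pow, ← pow_mul, ← pow_mul', div_mul_div_comm, hsplit,
    div_le_div_iff₀ (mul_pos (mul_pos (pow_pos hP _) (pow_pos hP _)) (pow_pos ht₀ _))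
      (by positivity)]
  have hcentre : t - r * n ≤ t := sub_le_self _ (by positivity)
  calc _ = (t - r * n) * (∏ j ∈ range (B * n), (D * (t - r * n) + (j + 1))) *
        (n.factorial * (r + 1) ^ n) ^ (S - B) * t ^ S := by ring
    _ ≤ t * ((D + B) * t) ^ (B * n) * P ^ (S - B) * t ^ S := by
      gcongr
      exact prod_range_le_pow_mul hr ht
    _ = t * (D + B) ^ (B * n) * (t ^ n) ^ B * P ^ (S - B) * t ^ S := by
      rw [mul_pow, pow_mul' t]; ring
    _ ≤ t * (D + B) ^ (B * n) * P ^ B * P ^ (S - B) * t ^ S := by gcongr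
    _ = _ := by ring

lemma gridValue_le (hD : D ≠ 0) (hr : r ≠ 0) (hn : n ≠ 0) (hB : B ≤ S) (hS : 3 ≤ S) (g : ℕ) :
    gridValue D r B n S g ≤
      ((D + B) ^ B / (r + 1) ^ (S - B) : ℝ) ^ n * (D ^ 2 * (1 / (g + 1) ^ 2)) := by
  have hD' : (1 : ℝ) ≤ D := Nat.one_le_cast.2 (Nat.pos_of_ne_zero hD)
  have hrn : (1 : ℝ) ≤ r * n := mod_cast Nat.pos_of_ne_zero (mul_ne_zero hr hn)
  have hg : (0 : ℝ) ≤ g / D := by positivity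
  refine (auxFun_le hr hn hB (le_add_of_nonneg_right hg)).trans
    (mul_le_mul_of_nonneg_left ?_ (by positivity))
  set t : ℝ := r * n + g / D with ht
  have ht₁ : 1 ≤ t := by linarith
  have hgt : (g + 1 : ℝ) ≤ D * t := by
    rw [ht, mul_add, mul_div_cancel₀ _ (by positivity : (D : ℝ) ≠ 0)]
    nlinarith
  calc t / t ^ S ≤ t / t ^ 3 := by gcongr
    _ = D ^ 2 * (1 / (D * t) ^ 2) := by field_simp
    _ ≤ D ^ 2 * (1 / (g + 1) ^ 2) := by gcongr

lemma summable_one_div_add_one_sq : Summable fun g : ℕ ↦ 1 / (g + 1 : ℝ) ^ 2 :=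
  (hasSum_one_div_add_pow 0 le_rfl).summable.congr fun g ↦ by simp

lemma summable_gridValue (hD : D ≠ 0) (hr : r ≠ 0) (hn : n ≠ 0) (hB : B ≤ S) (hS : 3 ≤ S) :
    Summable (gridValue D r B n S) :=
  .of_nonneg_of_le (gridValue_nonneg hD hr hn) (gridValue_le hD hr hn hB hS)
    ((summable_one_div_add_one_sq.mul_left _).mul_left _)

lemma tsum_gridValue_le (hD : D ≠ 0) (hr : r ≠ 0) (hn : n ≠ 0) (hB : B ≤ S) (hS : 3 ≤ S) :
    ∑' g, gridValue D r B n S g ≤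
      ((D + B) ^ B / (r + 1) ^ (S - B) : ℝ) ^ n * (D ^ 2 * zeta 2) := by
  rw [zeta, ← tsum_mul_left, ← tsum_mul_left]
  exact (summable_gridValue hD hr hn hB hS).tsum_le_tsum (gridValue_le hD hr hn hB hS)
    ((summable_one_div_add_one_sq.mul_left _).mul_left _)

lemma tsum_gridValue_pos (hD : D ≠ 0) (hr : r ≠ 0) (hn : n ≠ 0) (hB : B ≤ S) (hS : 3 ≤ S) :
    0 < ∑' g, gridValue D r B n S g :=
  (summable_gridValue hD hr hn hB hS).tsum_pos (gridValue_nonneg hD hr hn) 1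
    (gridValue_pos hD hr hn one_ne_zero)

lemma exists_forall_gridValue_le (hD : D ≠ 0) (hr : r ≠ 0) (hn : n ≠ 0) (hB : B ≤ S)
    (hS : 3 ≤ S) : ∃ M, ∀ g, gridValue D r B n S g ≤ gridValue D r B n S M := by
  refine continuous_of_discreteTopology.exists_forall_ge' 1 ?_
  rw [cocompact_eq_cofinite, Nat.cofinite_eq_atTop]
  exact (summable_gridValue hD hr hn hB hS).tendsto_atTop_zero.eventually_le_const
    (gridValue_pos hD hr hn one_ne_zero)

lemma le_of_forall_gridValue_le (hD : D ≠ 0) (hr : r ≠ 0) (hn : n ≠ 0) {G M : ℕ}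
    (hG : G * 3 ^ S ≤ B * n) (hM : ∀ g, gridValue D r B n S g ≤ gridValue D r B n S M) :
    G < M := by
  by_contra! hle
  obtain rfl | hM₀ := eq_or_ne M 0
  · exact ((hM 1).trans gridValue_zero.le).not_gt (gridValue_pos hD hr hn one_ne_zero)
  · exact ((gridValue_succ_le_iff hD hr hn hM₀).1 (hM (M + 1))).not_gt
      (lt_stepWeight hD hr hn ((Nat.mul_le_mul_right _ hle).trans hG))

lemma mul_gridValue_le_two_mul_tsum (hD : D ≠ 0) (hr : r ≠ 0) (hn : n ≠ 0) (hB : B ≤ S)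
    (hS : 3 ≤ S) {K M : ℕ} (hK : (2 * K * (K + 1) + 1) * 3 ^ S ≤ B * n)
    (hM : ∀ g, gridValue D r B n S g ≤ gridValue D r B n S M) :
    K * gridValue D r B n S M ≤ 2 * ∑' g, gridValue D r B n S g := by
  have hKM := le_of_forall_gridValue_le hD hr hn hK hM
  refine mul_le_two_mul_tsum_of_mul_le (summable_gridValue hD hr hn hB hS)
    (gridValue_nonneg hD hr hn) (by omega) fun g hg ↦ ?_
  obtain ⟨m, rfl⟩ := Nat.exists_eq_succ_of_ne_zero (by omega : M ≠ 0)
  have hm : m ≠ 0 := by omega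
  have hpeak : (m : ℝ) ≤ stepWeight D r B n S m := by
    refine le_of_mul_le_mul_right ?_ (gridValue_pos (B := B) (S := S) hD hr hn hm)
    rw [← natCast_mul_gridValue_succ hD hr hn]
    exact mul_le_mul_of_nonneg_left (hM m) m.cast_nonneg
  rw [natCast_mul_gridValue_succ hD hr hn, Nat.cast_succ, add_sub_cancel_right]
  exact mul_le_mul_of_nonneg_right (hpeak.trans (stepWeight_mono hr hn (by omega)))
    (gridValue_nonneg hD hr hn g)

theorem eventually_abs_tsum_gridValue_sub_le (hD : D ≠ 0) (hr : 3 ≤ r)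
    (hS : 2 * ((2 * r + 1) * D) ≤ S) {ε : ℝ} (hε : 0 < ε) :
    ∀ᶠ n in atTop, ∀ l ≠ 0,
      |∑' g, gridValue D r ((2 * r + 1) * D) n S (l * g) -
          (∑' g, gridValue D r ((2 * r + 1) * D) n S g) / l| ≤
        ε * ∑' g, gridValue D r ((2 * r + 1) * D) n S g := by
  obtain ⟨K, hK⟩ := exists_nat_gt (4 / ε)
  have hr₀ : r ≠ 0 := by omega
  have hB : 3 ≤ (2 * r + 1) * D := le_mul_of_le_of_one_le (by omega) (Nat.pos_of_ne_zero hD)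
  filter_upwards [eventually_ge_atTop ((2 * K * (K + 1) + 1) * 3 ^ S)] with n hn l hl
  have hn₀ : n ≠ 0 := (lt_of_lt_of_le (by positivity) hn).ne'
  obtain ⟨M, hM⟩ := exists_forall_gridValue_le (S := S) hD hr₀ hn₀
    (by omega : (2 * r + 1) * D ≤ S) (by omega)
  have hspread := mul_gridValue_le_two_mul_tsum hD hr₀ hn₀ (by omega) (by omega)
    (hn.trans (Nat.le_mul_of_pos_left n (by omega))) hM
  refine abs_tsum_mul_sub_tsum_div_le
    (summable_gridValue hD hr₀ hn₀ (by omega) (by omega)) hl fun N ↦ ?_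
  refine ((isUnimodal_gridValue hD hr hn₀ hS).sum_abs_sub_le (gridValue_nonneg hD hr₀ hn₀) hM
    N).trans ?_
  have hnonneg := gridValue_nonneg (B := (2 * r + 1) * D) (S := S) hD hr₀ hn₀ M
  rw [div_lt_iff₀ hε] at hK
  nlinarith

end GridValues

section Linking

variable {r n S d l : ℕ}

lemma auxFun_eq_zero_of_lt (hd : d ≠ 0) (hl : l ≠ 0) {ν : ℕ} (hν : ν + 1 < r * n * d) :
    auxFun (d * l) r ((2 * r + 1) * (d * l)) n S ((ν + 1) / d) = 0 := by
  have hlt : l * (ν + 1) < d * l * (r * n) := by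
    calc l * (ν + 1) < l * (r * n * d) := Nat.mul_lt_mul_of_pos_left hν (Nat.pos_of_ne_zero hl)
      _ = d * l * (r * n) := by ring
  have hle : d * l * (r * n) ≤ (2 * r + 1) * (d * l) * n := by
    calc d * l * (r * n) = r * (d * l) * n := by ring
      _ ≤ (2 * r + 1) * (d * l) * n := by gcongr; omega
  obtain ⟨j, hj⟩ := Nat.exists_eq_add_of_lt hlt
  have hj' : (d * l * (r * n) : ℝ) = l * (ν + 1) + j + 1 := mod_cast hj
  have hroot : ∏ j ∈ range ((2 * r + 1) * (d * l) * n),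
      (((d * l : ℕ) : ℝ) * ((ν + 1) / d - r * n) + (j + 1)) = 0 := by
    refine prod_eq_zero (i := j) (mem_range.2 (by omega)) ?_
    push_cast
    rw [mul_sub, hj']
    field_simp
    ring
  rw [auxFun, hroot, mul_zero, zero_mul, zero_div]

lemma tsum_auxFun_eq_tsum_gridValue (hd : d ≠ 0) (hl : l ≠ 0) (hr : r ≠ 0) (hn : n ≠ 0)
    {a : ℝ} (ha : HasSum (fun ν : ℕ ↦ auxFun (d * l) r ((2 * r + 1) * (d * l)) n S ((ν + 1) / d))
      a) :
    a = ∑' g, gridValue (d * l) r ((2 * r + 1) * (d * l)) n S (l * g) := by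
  obtain ⟨M, hM⟩ := Nat.exists_eq_succ_of_ne_zero (mul_ne_zero (mul_ne_zero hr hn) hd)
  have hshift : ∀ g : ℕ, auxFun (d * l) r ((2 * r + 1) * (d * l)) n S (((g + M : ℕ) + 1) / d) =
      gridValue (d * l) r ((2 * r + 1) * (d * l)) n S (l * g) := by
    intro g
    have hM' : (r * n * d : ℝ) = M + 1 := mod_cast hM
    rw [gridValue]
    congr 1
    push_cast
    field_simp
    linarith
  rw [← ha.tsum_eq, ← ha.summable.sum_add_tsum_nat_add M,
    sum_eq_zero fun ν hν ↦ auxFun_eq_zero_of_lt hd hl (by have := mem_range.1 hν; omega), zero_add,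
    tsum_congr hshift]

lemma tendsto_mul_auxFun {D B : ℕ} (hr : r ≠ 0) (hn : n ≠ 0) (hB : B ≤ S) (hS : 3 ≤ S) :
    Tendsto (fun t ↦ t * auxFun D r B n S t) atTop (𝓝 0) := by
  set C : ℝ := ((D + B) ^ B / (r + 1) ^ (S - B)) ^ n
  have hlim : Tendsto (fun t ↦ C * t⁻¹) atTop (𝓝 0) := by
    simpa only [mul_zero] using (tendsto_inv_atTop_zero (𝕜 := ℝ)).const_mul C
  refine squeeze_zero' ?_ ?_ hlim
  · filter_upwards [eventually_ge_atTop (r * n : ℝ), eventually_ge_atTop 0] with t ht ht₀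
    exact mul_nonneg ht₀ (auxFun_nonneg ht)
  · filter_upwards [eventually_ge_atTop (r * n : ℝ), eventually_ge_atTop 1] with t ht ht₁
    calc t * auxFun D r B n S t ≤ t * (C * (t / t ^ S)) := by
          gcongr
          exact auxFun_le hr hn hB ht
      _ ≤ t * (C * (t / t ^ 3)) := by gcongr
      _ = C * t⁻¹ := by field_simp

lemma exists_int_eq_mul_sum {ι : Type*} {s : Finset ι} {c : ℝ} {f : ι → ℝ}
    (hf : ∀ i ∈ s, ∃ z : ℤ, c * f i = z) : ∃ z : ℤ, c * ∑ i ∈ s, f i = z := by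
  choose! z hz using hf
  exact ⟨∑ i ∈ s, z i, by rw [mul_sum, sum_congr rfl hz, Int.cast_sum]⟩

lemma exists_int_eq_sum_div_pow {L k m : ℕ} {a : ℕ → ℕ → ℝ} (hd : d ≠ 0) (hl : l ≠ 0)
    (hr : r ≠ 0) (hn : n ≠ 0) (hS : (2 * r + 1) * (d * l) < S) (hL₀ : L ≠ 0)
    (hL : ∀ m, 1 ≤ m → m ≤ n → m ∣ L)
    (ha : HasPartialFraction n S (auxFun (d * l) r ((2 * r + 1) * (d * l)) n S) a)
    (hk : k ≤ n) (hm : m < d * k) :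
    ∃ z : ℤ, (L : ℝ) ^ S * ∑ i ∈ range S, a k i / ((m + 1) / d) ^ (i + 1) = z := by
  have hlt : l * (m + 1) < d * l * (r * n) + d * l * k := by
    calc l * (m + 1) ≤ l * (d * k) := Nat.mul_le_mul_left _ hm
      _ = d * l * k := by ring
      _ < d * l * (r * n) + d * l * k := Nat.lt_add_of_pos_left (by positivity)
  have hle : d * l * (r * n) + d * l * k ≤ (2 * r + 1) * (d * l) * n := by
    calc d * l * (r * n) + d * l * k ≤ d * l * (r * n) + d * l * n := by gcongr
      _ = (r + 1) * (d * l) * n := by ring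
      _ ≤ (2 * r + 1) * (d * l) * n := by gcongr; omega
  obtain ⟨j, hj⟩ := Nat.exists_eq_add_of_lt hlt
  have hj' : (d * l * (r * n) + d * l * k : ℝ) = l * (m + 1) + j + 1 := mod_cast hj
  have hpoint : ((m + 1) / d : ℝ) = r * n - (j + 1) / (d * l : ℕ) + k := by
    push_cast
    field_simp
    linarith
  rw [hpoint]
  exact exists_int_eq_sum_div_pow_of_zero (mul_ne_zero hd hl) hS hL₀ hL ha hk (j := j) (by omega)
    rfl (by rw [← hpoint]; positivity)

end Linking

section LinearForms

variable {r n S D L : ℕ}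

theorem exists_linearForm_tsum_gridValue (hD : D ≠ 0) (hDe : Even D) (hr : r ≠ 0) (hn : n ≠ 0)
    (hS : (2 * r + 1) * D < S) (hSe : Even S) (hL₀ : L ≠ 0)
    (hL : ∀ m, 1 ≤ m → m ≤ n → m ∣ L) :
    ∃ ρ : ℕ → ℝ, ρ 0 = 0 ∧ (∀ i < S, Odd i → ρ i = 0) ∧ (∀ i, ∃ z : ℤ, (L : ℝ) ^ S * ρ i = z) ∧
      ∀ d l, d * l = D → ∃ z : ℤ,
        (L : ℝ) ^ S * ∑' g, gridValue D r ((2 * r + 1) * D) n S (l * g) =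
          (L : ℝ) ^ S * ∑ i ∈ range S, ρ i * d ^ (i + 1) * zeta (i + 1) - z := by
  obtain ⟨a, ha, haL⟩ :=
    exists_hasPartialFraction_auxFun (D := D) (r := r) hn hS hL₀ hL
  have hB : 3 ≤ (2 * r + 1) * D := le_mul_of_le_of_one_le (by omega) (Nat.pos_of_ne_zero hD)
  have hres := sum_residue_eq_zero (by omega) ha (tendsto_mul_auxFun hr hn hS.le (by omega))
  refine ⟨fun i ↦ ∑ k ∈ range (n + 1), a k i, hres,
    fun i ↦ sum_coeff_eq_zero_of_odd ha (auxFun_neg_sub hDe hD hSe r),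
    fun i ↦ exists_int_eq_mul_sum fun k _ ↦ haL k i, ?_⟩
  rintro d l rfl
  obtain ⟨hd, hl⟩ := mul_ne_zero_iff.1 hD
  obtain ⟨z, hz⟩ := exists_int_eq_mul_sum (c := (L : ℝ) ^ S) (s := range (n + 1))
    fun k hk ↦ exists_int_eq_mul_sum fun m hm ↦ exists_int_eq_sum_div_pow hd hl hr hn hS hL₀ hL ha
      (Nat.lt_succ_iff.1 (mem_range.1 hk)) (mem_range.1 hm)
  refine ⟨z, ?_⟩
  rw [← tsum_auxFun_eq_tsum_gridValue hd hl hr hn (hasSum_linearForm ha hres hd), mul_sub, ← hz]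

lemma lcmUpto_le_pow (n : ℕ) : (Nat.lcmUpto n : ℝ) ≤ 256 ^ n := by
  have hlog : Real.log 4 + 4 ≤ Real.log 256 := by
    have hexp : Real.exp 4 ≤ 64 := by
      calc Real.exp 4 = Real.exp 1 ^ 4 := by rw [← Real.exp_nat_mul]; norm_num
        _ ≤ 2.7182818286 ^ 4 := by gcongr; exact Real.exp_one_lt_d9.le
        _ ≤ 64 := by norm_num
    rw [show (256 : ℝ) = 4 * 64 by norm_num, Real.log_mul (by norm_num) (by norm_num)]
    gcongr
    rwa [Real.le_log_iff_exp_le (by norm_num)]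
  rw [← Real.log_le_log_iff (mod_cast Nat.lcmUpto_pos n) (by positivity),
    ← Chebyshev.psi_eq_log_lcmUpto, Real.log_pow, mul_comm]
  exact (Chebyshev.psi_le_const_mul_self n.cast_nonneg).trans (by gcongr)

lemma tendsto_lcmUpto_pow_mul_tsum_gridValue {B : ℕ} (hD : D ≠ 0) (hr : r ≠ 0) (hB : B ≤ S)
    (hS : 3 ≤ S) (hrate : 256 ^ S * ((D + B) ^ B / (r + 1) ^ (S - B) : ℝ) < 1) :
    Tendsto (fun n ↦ (Nat.lcmUpto n : ℝ) ^ S * ∑' g, gridValue D r B n S g) atTop (𝓝 0) := by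
  have hgeom := (tendsto_pow_atTop_nhds_zero_of_lt_one (by positivity) hrate).mul_const
    (D ^ 2 * zeta 2)
  rw [zero_mul] at hgeom
  refine squeeze_zero' ?_ ?_ hgeom
  · filter_upwards [eventually_ne_atTop 0] with n hn
    exact mul_nonneg (by positivity) (tsum_gridValue_pos hD hr hn hB hS).le
  · filter_upwards [eventually_ne_atTop 0] with n hn
    calc (Nat.lcmUpto n : ℝ) ^ S * ∑' g, gridValue D r B n S g ≤
          (256 ^ n) ^ S * (((D + B) ^ B / (r + 1) ^ (S - B)) ^ n * (D ^ 2 * zeta 2)) := by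
          gcongr
          · exact (tsum_gridValue_pos hD hr hn hB hS).le
          · exact lcmUpto_le_pow n
          · exact tsum_gridValue_le hD hr hn hB hS
      _ = _ := by ring

lemma exists_common_denominator (s : ℕ) :
    ∃ A : ℕ, A ≠ 0 ∧ ∀ j < s, ¬ Irrational (zeta j) → ∃ z : ℤ, A * zeta j = z := by
  have hden : ∀ j, ∃ q : ℕ, q ≠ 0 ∧ (¬ Irrational (zeta j) → ∃ z : ℤ, q * zeta j = z) := by
    intro j
    by_cases hj : Irrational (zeta j)
    · exact ⟨1, one_ne_zero, fun h ↦ absurd hj h⟩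
    · obtain ⟨x, hx⟩ := not_not.1 hj
      exact ⟨x.den, x.den_nz, fun _ ↦ ⟨x.num, by rw [← hx]; exact_mod_cast x.den_mul_eq_num⟩⟩
  choose q hq₀ hq using hden
  refine ⟨∏ j ∈ range s, q j, prod_ne_zero_iff.2 fun j _ ↦ hq₀ j, fun j hj hrat ↦ ?_⟩
  obtain ⟨z, hz⟩ := hq j hrat
  refine ⟨(∏ i ∈ (range s).erase j, q i : ℕ) * z, ?_⟩
  rw [← prod_erase_mul _ _ (mem_range.2 hj), Nat.cast_mul, mul_assoc, hz]
  push_cast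
  rfl

end LinearForms

section Elimination

open Polynomial in
/-- The polynomial `∏ i ∈ I, (X - 2 ^ i)`. Its coefficients weight the sampled sums so that the
contribution of each `ζ(i)` with `i ∈ I` cancels. -/
noncomputable def elimPoly (I : Finset ℕ) : ℤ[X] := ∏ i ∈ I, (X - C (2 ^ i))

/-- The combination of the sampled sums `∑' g, e (2 ^ (k - u) * g)`, `u ≤ k`, weighted by the
coefficients of `elimPoly I`. It is meaningful only for `#I ≤ k`, when no coefficient is lost. -/
noncomputable def elimForm (k : ℕ) (I : Finset ℕ) (e : ℕ → ℝ) : ℝ :=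
  ∑ u ∈ range (k + 1), (elimPoly I).coeff u * ∑' g, e (2 ^ (k - u) * g)

variable {k : ℕ} {I : Finset ℕ}

open Polynomial in
lemma sum_coeff_elimPoly_mul_pow (hI : #I ≤ k) (x : ℝ) :
    ∑ u ∈ range (k + 1), ((elimPoly I).coeff u : ℝ) * x ^ u = ∏ i ∈ I, (x - 2 ^ i) := by
  have hdeg : (elimPoly I).natDegree < k + 1 := by
    rw [elimPoly, natDegree_prod_of_monic _ _ fun i _ ↦ monic_X_sub_C _]
    simpa only [natDegree_X_sub_C, sum_const, smul_eq_mul, mul_one, Nat.lt_succ_iff] using hI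
  have heval := eval₂_eq_sum_range' (Int.castRingHom ℝ) hdeg x
  simp only [eq_intCast] at heval
  rw [← heval, elimPoly, eval₂_finsetProd]
  exact prod_congr rfl fun i _ ↦ by rw [eval₂_sub, eval₂_X, eval₂_C, map_pow, map_ofNat]

lemma abs_elimForm_sub_le (hI : #I ≤ k) {e : ℕ → ℝ} {V : ℝ}
    (hV : ∀ l ≠ 0, |∑' g, e (l * g) - (∑' g, e g) / l| ≤ V) :
    |elimForm k I e - (∏ i ∈ I, (2 - 2 ^ i)) / 2 ^ k * ∑' g, e g| ≤
      (∑ u ∈ range (k + 1), |((elimPoly I).coeff u : ℝ)|) * V := by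
  have hmain : (∏ i ∈ I, (2 - 2 ^ i)) / 2 ^ k * ∑' g, e g =
      ∑ u ∈ range (k + 1), (elimPoly I).coeff u * ((∑' g, e g) / (2 ^ (k - u) : ℕ)) := by
    rw [← sum_coeff_elimPoly_mul_pow hI, div_mul_eq_mul_div, sum_mul, sum_div]
    refine sum_congr rfl fun u hu ↦ ?_
    rw [← Nat.add_sub_cancel' (Nat.lt_succ_iff.1 (mem_range.1 hu)), pow_add,
      Nat.add_sub_cancel_left]
    push_cast
    field_simp
  rw [hmain, elimForm, ← sum_sub_distrib, sum_mul]
  refine (abs_sum_le_sum_abs _ _).trans (sum_le_sum fun u _ ↦ ?_)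
  rw [← mul_sub, abs_mul]
  exact mul_le_mul_of_nonneg_left (hV _ (by positivity)) (abs_nonneg _)

lemma mul_elimForm_eq (hI : #I ≤ k) {S : ℕ} {c : ℝ} {e ρ : ℕ → ℝ} {y : ℕ → ℤ}
    (hy : ∀ u ∈ range (k + 1), c * ∑' g, e (2 ^ (k - u) * g) =
      c * ∑ i ∈ range S, ρ i * (2 ^ (i + 1)) ^ u * zeta (i + 1) - y u) :
    c * elimForm k I e =
      c * ∑ i ∈ range S, ρ i * (∏ j ∈ I, (2 ^ (i + 1) - 2 ^ j)) * zeta (i + 1) -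
        (∑ u ∈ range (k + 1), (elimPoly I).coeff u * y u : ℤ) := by
  calc c * elimForm k I e =
      ∑ u ∈ range (k + 1), (elimPoly I).coeff u * (c * ∑' g, e (2 ^ (k - u) * g)) := by
        simp only [elimForm, mul_sum, mul_left_comm]
    _ = ∑ u ∈ range (k + 1), (elimPoly I).coeff u *
        (c * ∑ i ∈ range S, ρ i * (2 ^ (i + 1)) ^ u * zeta (i + 1) - y u) :=
        sum_congr rfl fun u hu ↦ by rw [hy u hu]
    _ = _ := by
        simp only [← sum_coeff_elimPoly_mul_pow hI, mul_sub, sum_sub_distrib, mul_sum, sum_mul]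
        rw [sum_comm]
        push_cast
        congr! 3
        ring

lemma exists_int_eq_mul_elimForm {r n S L A : ℕ} (hk : k ≠ 0) (hI : #I ≤ k) (hr : r ≠ 0)
    (hn : n ≠ 0) (hS : (2 * r + 1) * 2 ^ k < S) (hSe : Even S) (hL₀ : L ≠ 0)
    (hL : ∀ m, 1 ≤ m → m ≤ n → m ∣ L)
    (hA : ∀ i < S, Odd i → 3 ≤ i → i ∉ I → ∃ z : ℤ, A * zeta i = z) :
    ∃ z : ℤ, A * ((L : ℝ) ^ S *
      elimForm k I (gridValue (2 ^ k) r ((2 * r + 1) * 2 ^ k) n S)) = z := by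
  obtain ⟨ρ, hρ₀, hρ_odd, hρL, hform⟩ := exists_linearForm_tsum_gridValue (D := 2 ^ k)
    (by positivity) ((Nat.even_pow).2 ⟨even_two, hk⟩) hr hn hS hSe hL₀ hL
  have hsample : ∀ u ∈ range (k + 1), ∃ z : ℤ,
      (L : ℝ) ^ S * ∑' g, gridValue (2 ^ k) r ((2 * r + 1) * 2 ^ k) n S (2 ^ (k - u) * g) =
        (L : ℝ) ^ S * ∑ i ∈ range S, ρ i * (2 ^ (i + 1)) ^ u * zeta (i + 1) - z := by
    intro u hu
    obtain ⟨z, hz⟩ := hform (2 ^ u) (2 ^ (k - u))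
      (by rw [← pow_add, Nat.add_sub_cancel' (Nat.lt_succ_iff.1 (mem_range.1 hu))])
    refine ⟨z, hz.trans ?_⟩
    simp only [Nat.cast_pow, Nat.cast_ofNat, pow_right_comm (2 : ℝ) u]
  choose! y hy using hsample
  have hterm : ∀ i ∈ range S, ∃ z : ℤ,
      (A * (L : ℝ) ^ S) * (ρ i * (∏ j ∈ I, (2 ^ (i + 1) - 2 ^ j)) * zeta (i + 1)) = z := by
    intro i hi
    have hi' := mem_range.1 hi
    obtain hi_odd | hi_even := i.even_or_odd.symm
    · exact ⟨0, by simp [hρ_odd i hi' hi_odd]⟩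
    obtain rfl | hi₀ := eq_or_ne i 0
    · exact ⟨0, by simp [hρ₀]⟩
    by_cases hiI : i + 1 ∈ I
    · exact ⟨0, by simp [prod_eq_zero hiI]⟩
    obtain ⟨z, hz⟩ := hA (i + 1) (by grind) hi_even.add_one (by grind) hiI
    obtain ⟨x, hx⟩ := hρL i
    refine ⟨x * (∏ j ∈ I, (2 ^ (i + 1) - 2 ^ j)) * z, ?_⟩
    push_cast
    rw [← hx, ← hz]
    ring
  obtain ⟨z, hz⟩ := exists_int_eq_mul_sum hterm
  refine ⟨z - A * ∑ u ∈ range (k + 1), (elimPoly I).coeff u * y u, ?_⟩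
  rw [mul_elimForm_eq hI hy, mul_sub, ← mul_assoc, hz]
  push_cast
  rfl

lemma exists_elimForm_ne_zero_and_abs_le (hI : #I ≤ k) (hI₁ : 1 ∉ I) :
    ∃ ε > 0, ∃ C, ∀ e : ℕ → ℝ, 0 < ∑' g, e g →
      (∀ l ≠ 0, |∑' g, e (l * g) - (∑' g, e g) / l| ≤ ε * ∑' g, e g) →
        elimForm k I e ≠ 0 ∧ |elimForm k I e| ≤ C * ∑' g, e g := by
  set W : ℝ := (∏ i ∈ I, (2 - 2 ^ i)) / 2 ^ k
  set s := ∑ u ∈ range (k + 1), |((elimPoly I).coeff u : ℝ)|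
  have hs : 0 ≤ s := sum_nonneg fun _ _ ↦ abs_nonneg _
  have hW₀ : 0 < |W| := by
    refine abs_pos.2 (div_ne_zero (prod_ne_zero_iff.2 fun i hi hzero ↦ hI₁ ?_) (by positivity))
    have hpow : (2 : ℝ) ^ 1 = 2 ^ i := by linarith
    rwa [pow_right_injective₀ two_pos (by norm_num) hpow]
  refine ⟨|W| / (2 * (s + 1)), by positivity, 2 * |W|, fun e he hsample ↦ ?_⟩
  set T := ∑' g, e g
  have hclose : |elimForm k I e - W * T| ≤ |W| * T / 2 := by
    refine (abs_elimForm_sub_le hI hsample).trans ?_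
    calc s * (|W| / (2 * (s + 1)) * T) ≤ (s + 1) * (|W| / (2 * (s + 1)) * T) := by
          gcongr
          exact le_add_of_nonneg_right zero_le_one
      _ = |W| * T / 2 := by field_simp
  have hWT : |W * T| = |W| * T := by rw [abs_mul, abs_of_pos he]
  have hpos : 0 < |W| * T := mul_pos hW₀ he
  refine ⟨fun hzero ↦ ?_, ?_⟩
  · rw [hzero, zero_sub, abs_neg, hWT] at hclose
    linarith
  · linarith [abs_sub_abs_le_abs_sub (elimForm k I e) (W * T)]

end Elimination

/-- Taking `r = 511` makes `r + 1 = 2 ^ 9` beat the base `2 ^ 8` of `lcmUpto_le_pow`. -/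
lemma two_pow_rate_lt_one {k S : ℕ} (hS : 1023 * 2 ^ k * (k + 19) < S) :
    (256 : ℝ) ^ S * (((2 ^ k : ℕ) + ((2 * 511 + 1) * 2 ^ k : ℕ)) ^ ((2 * 511 + 1) * 2 ^ k) /
      ((511 : ℕ) + 1) ^ (S - (2 * 511 + 1) * 2 ^ k)) < 1 := by
  set B := (2 * 511 + 1) * 2 ^ k with hB
  have hBS : B ≤ S := by nlinarith
  obtain ⟨m, rfl⟩ := Nat.exists_eq_add_of_le hBS
  have hbase : ((2 ^ k : ℕ) + (B : ℕ) : ℝ) = 2 ^ (k + 10) := by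
    rw [hB]
    push_cast
    ring
  rw [Nat.add_sub_cancel_left, hbase, show ((511 : ℕ) + 1 : ℝ) = 2 ^ 9 by norm_num,
    show (256 : ℝ) = 2 ^ 8 by norm_num, ← mul_div_assoc, div_lt_one (by positivity), ← pow_mul,
    ← pow_mul, ← pow_mul, ← pow_add]
  exact pow_lt_pow_right₀ one_lt_two (by nlinarith)

theorem lt_ncard_irrational_zeta {k S : ℕ} (hk : k ≠ 0) (hSe : Even S)
    (hS : 1023 * 2 ^ k * (k + 19) < S) :
    k < {i : ℕ | Odd i ∧ 3 ≤ i ∧ i < S ∧ Irrational (zeta i)}.ncard := by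
  by_contra! hcard
  have hfin : {i : ℕ | Odd i ∧ 3 ≤ i ∧ i < S ∧ Irrational (zeta i)}.Finite :=
    (Set.finite_lt_nat S).subset fun i hi ↦ hi.2.2.1
  obtain ⟨I, hI⟩ := hfin.exists_finset_coe
  have hmem (i : ℕ) : i ∈ I ↔ Odd i ∧ 3 ≤ i ∧ i < S ∧ Irrational (zeta i) := Set.ext_iff.1 hI i
  rw [← hI, Set.ncard_coe_finset] at hcard
  have h2BS : 2 * ((2 * 511 + 1) * 2 ^ k) ≤ S := by nlinarith
  have hBS : (2 * 511 + 1) * 2 ^ k < S := by nlinarith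
  have hD : 2 ^ k ≠ 0 := by positivity
  obtain ⟨A, hA₀, hA⟩ := exists_common_denominator S
  obtain ⟨ε, hε, C, hform⟩ := exists_elimForm_ne_zero_and_abs_le hcard (by simp [hmem])
  have hsmall := (tendsto_lcmUpto_pow_mul_tsum_gridValue hD (by norm_num) hBS.le (by omega)
    (two_pow_rate_lt_one hS)).const_mul (A * C)
  rw [mul_zero] at hsmall
  obtain ⟨n, hn, hlt, hsample⟩ := ((eventually_ne_atTop 0).and
    ((hsmall.eventually_lt_const one_pos).and (eventually_abs_tsum_gridValue_sub_le hD
      (r := 511) (by norm_num) h2BS hε))).exists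
  obtain ⟨hne, hle⟩ := hform _ (tsum_gridValue_pos hD (by norm_num) hn hBS.le (by omega)) hsample
  obtain ⟨z, hz⟩ := exists_int_eq_mul_elimForm hk hcard (r := 511) (by norm_num) hn hBS hSe
    n.lcmUpto_ne_zero (fun m hm hmn ↦ dvd_lcm (f := id) (mem_Icc.2 ⟨hm, hmn⟩))
    fun i hi hodd h3 hiI ↦ hA i hi fun hirr ↦ hiI ((hmem i).2 ⟨hodd, h3, hi, hirr⟩)
  have hz₀ : z ≠ 0 := by
    rintro rfl
    have hL₀ : (n.lcmUpto : ℝ) ≠ 0 := Nat.cast_ne_zero.2 n.lcmUpto_ne_zero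
    simp [hA₀, hL₀, hne] at hz
  refine (Int.one_le_abs hz₀).not_gt (Int.cast_lt (R := ℝ).1 ?_)
  rw [Int.cast_abs, ← hz, abs_mul, abs_mul, Nat.abs_cast, abs_of_nonneg (by positivity)]
  refine (mul_le_mul_of_nonneg_left (mul_le_mul_of_nonneg_left hle (by positivity))
    A.cast_nonneg).trans_lt ?_
  rw [Int.cast_one]
  linarith

lemma eventually_two_pow_floor_log_lt {c : ℝ} (hc₀ : 0 < c) (hc : c < 1 / Real.log 2) :
    ∀ᶠ a : ℕ in atTop,
      1023 * 2 ^ (⌊c * Real.log a⌋₊ + 1) * (⌊c * Real.log a⌋₊ + 1 + 19) < a := by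
  have hlog2 := Real.log_pos one_lt_two
  have hδ : 0 < 1 - c * Real.log 2 := sub_pos.2 ((lt_div_iff₀ hlog2).1 hc)
  have hlittle : (fun x : ℝ ↦ c * Real.log x + 20) =o[atTop] fun x ↦ x ^ (1 - c * Real.log 2) :=
    ((isLittleO_log_rpow_atTop hδ).const_mul_left c).add (Asymptotics.isLittleO_const_left.2
      (.inr (tendsto_norm_atTop_atTop.comp (tendsto_rpow_atTop hδ))))
  have hbound := tendsto_natCast_atTop_atTop.eventually
    (hlittle.bound (by norm_num : (0 : ℝ) < 1 / 4092))
  filter_upwards [hbound, eventually_ge_atTop 1] with a ha ha₁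
  have ha₀ : (0 : ℝ) < a := mod_cast ha₁
  have hlog : 0 ≤ c * Real.log a := mul_nonneg hc₀.le (Real.log_natCast_nonneg a)
  have hfloor := Nat.floor_le hlog
  set m := ⌊c * Real.log a⌋₊
  have hpow : (2 : ℝ) ^ m ≤ a ^ (c * Real.log 2) := by
    calc (2 : ℝ) ^ m = 2 ^ (m : ℝ) := (Real.rpow_natCast _ _).symm
      _ ≤ 2 ^ (c * Real.log a) := Real.rpow_le_rpow_of_exponent_le one_le_two hfloor
      _ = a ^ (c * Real.log 2) := by
        rw [Real.rpow_def_of_pos two_pos, Real.rpow_def_of_pos ha₀]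
        ring_nf
  rw [Real.norm_of_nonneg (by positivity), Real.norm_of_nonneg (by positivity)] at ha
  have hcast : (1023 * 2 ^ (m + 1) * (m + 1 + 19) : ℝ) < a := by
    calc (1023 * 2 ^ (m + 1) * (m + 1 + 19) : ℝ) = 2046 * (2 ^ m * (m + 20)) := by ring
      _ ≤ 2046 * (a ^ (c * Real.log 2) * (1 / 4092 * a ^ (1 - c * Real.log 2))) := by
        gcongr
        linarith
      _ = a ^ (c * Real.log 2 + (1 - c * Real.log 2)) / 2 := by
        rw [Real.rpow_add ha₀]
        ring
      _ < a := by
        rw [add_sub_cancel, Real.rpow_one]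
        exact half_lt_self ha₀
  exact_mod_cast hcast

theorem stmt1_general {c : ℝ} (hc : c < 1 / Real.log 2) : ∀ᶠ a : ℕ in atTop,
    c * Real.log a ≤ ({i : ℕ | Odd i ∧ 3 ≤ i ∧ i ≤ a ∧ Irrational (zeta i)}.ncard : ℝ) := by
  obtain hc₀ | hc₀ := le_or_gt c 0
  · exact .of_forall fun a ↦ (mul_nonpos_of_nonpos_of_nonneg hc₀
      (Real.log_natCast_nonneg a)).trans (Nat.cast_nonneg _)
  filter_upwards [eventually_two_pow_floor_log_lt hc₀ hc] with a ha
  obtain ⟨S, hSe, haS, hSa⟩ : ∃ S, Even S ∧ a ≤ S ∧ S ≤ a + 1 := by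
    obtain he | ho := a.even_or_odd
    exacts [⟨a, he, le_rfl, a.le_succ⟩, ⟨a + 1, ho.add_one, a.le_succ, le_rfl⟩]
  have hmany := lt_ncard_irrational_zeta (Nat.succ_ne_zero _) hSe (ha.trans_le haS)
  have hsub : {i : ℕ | Odd i ∧ 3 ≤ i ∧ i < S ∧ Irrational (zeta i)} ⊆
      {i : ℕ | Odd i ∧ 3 ≤ i ∧ i ≤ a ∧ Irrational (zeta i)} :=
    fun i hi ↦ ⟨hi.1, hi.2.1, Nat.le_of_lt_succ (hi.2.2.1.trans_le hSa), hi.2.2.2⟩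
  calc c * Real.log a ≤ (⌊c * Real.log a⌋₊ + 1 : ℕ) := by
        exact_mod_cast (Nat.lt_floor_add_one _).le
    _ ≤ _ := Nat.cast_le.2 (hmany.le.trans (Set.ncard_le_ncard hsub
        ((Set.finite_le_nat a).subset fun i hi ↦ hi.2.2.1)))

/-- For every ε > 0 there exists A such that for every odd a ≥ A, n₁(a) + n₂(a) ≥
(2−ε)·(log a)/(1+log 2), where n₁(a) counts odd i ∈ {3,…,a} with ζ(i) irrational, and n₂(a)
counts odd j ∈ {5,…,a} with ζ(j) irrational and ζ(j−2) rational. -/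
theorem stmt1 :
    ∀ ε : ℝ, 0 < ε → ∃ A : ℕ, ∀ a : ℕ, Odd a → A ≤ a →
      (2 - ε) * Real.log a / (1 + Real.log 2) ≤
        (({i : ℕ | Odd i ∧ 3 ≤ i ∧ i ≤ a ∧ Irrational (zeta i)}.ncard : ℝ) +
         ({j : ℕ | Odd j ∧ 5 ≤ j ∧ j ≤ a ∧ Irrational (zeta j) ∧
            ¬ Irrational (zeta (j - 2))}.ncard : ℝ)) := by
  intro ε hε
  have hlog2 := Real.log_pos one_lt_two
  have hrate : (2 - ε) / (1 + Real.log 2) < 1 / Real.log 2 := by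
    rw [div_lt_div_iff₀ (by positivity) hlog2]
    nlinarith [Real.log_two_lt_d9]
  obtain ⟨A, hA⟩ := eventually_atTop.1 (stmt1_general hrate)
  exact ⟨A, fun a _ ha ↦ by
    rw [mul_div_right_comm]
    exact (hA a ha).trans (le_add_of_nonneg_right (Nat.cast_nonneg _))⟩
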